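/- Let n ≥ 1, Q = 2n+2, and suppose 1 < p < ∞, 1 < q' < ∞, q is the Hölder conjugate of q' (1/q + 1/q' = 1), p' is the Hölder conjugate of p, 0 < λ < Q, α + β ≥ 0, λ + α + β ≤ Q, β < Q/p', α < Q/q, 1/p + 1/q' + (λ+α+β)/Q = 2, and q > p. Let C = sup{ ‖I_λ(g)(u)·|u|^{-α}‖_{L^q(ℍⁿ)} : g ≥ 0, ‖g(v)·|v|^{β}‖_{L^p(ℍⁿ)} = 1 }, and let (g_i) be a sequence of nonnegative functions with ‖g_i(v)·|v|^{β}‖_{L^p(ℍⁿ)} = 1, ‖I_λ(g_i)(u)·|u|^{-α}‖_{L^q(ℍⁿ)} → C, and ∫_{B_ℍ(0,1)} |g_i(v)|^p |v|^{βp} dv = 1/2 for all i. Set μ_i = |g_i(v)|^p |v|^{βp} dv. Then: (i) the compactness alternative holds for (μ_i), i.e. there exist v_i ∈ ℍⁿ such that for every ε > 0 there is R_ε > 0 with μ_i(B_ℍ(v_i,R_ε)) ≥ 1 − ε for all i; and (ii) any weak-* limit μ of a subsequence of (μ_i) satisfies μ(ℍⁿ) = 1. -/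

import Mathlib

open MeasureTheory ENNReal Filter

noncomputable section

/-- The Heisenberg group `ℍⁿ = ℂⁿ × ℝ` (as a measure space, with Lebesgue/Haar measure). -/
abbrev Hn (n : ℕ) := (Fin n → ℂ) × ℝ

/-- Euclidean norm of the `ℂⁿ` component. -/
def znorm {n : ℕ} (z : Fin n → ℂ) : ℝ := Real.sqrt (∑ j, Complex.normSq (z j))

/-- Homogeneous norm `|u| = (|z|⁴ + t²)^{1/4}` on the Heisenberg group. -/
def Hnorm {n : ℕ} (u : Hn n) : ℝ := (znorm u.1 ^ 4 + u.2 ^ 2) ^ ((1 : ℝ)/4)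

/-- Heisenberg group law `(z,t)·(z',t') = (z+z', t+t'+2 Im (z ⬝ conj z'))`. -/
def Hmul {n : ℕ} (u v : Hn n) : Hn n :=
  (u.1 + v.1, u.2 + v.2 + 2 * (∑ j, u.1 j * (starRingEnd ℂ) (v.1 j)).im)

/-- Heisenberg group inverse `(z,t)⁻¹ = (-z,-t)`. -/
def Hinv {n : ℕ} (u : Hn n) : Hn n := (-u.1, -u.2)

/-- Left-invariant quasi-distance `d(u,v) = |u⁻¹ v|`. -/
def Hdist {n : ℕ} (u v : Hn n) : ℝ := Hnorm (Hmul (Hinv u) v)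

/-- Heisenberg ball `B_ℍ(u,R)`. -/
def Hball {n : ℕ} (u : Hn n) (R : ℝ) : Set (Hn n) := {v | Hdist u v < R}

/-- Fractional integral operator `I_λ(g)(u) = ∫ g(v)/|u⁻¹v|^λ dv`. -/
def Ilam {n : ℕ} (lam : ℝ) (g : Hn n → ℝ) (u : Hn n) : ℝ :=
  ∫ v, g v / Hdist u v ^ lam

/-- The measure `|g(v)|^p |v|^{βp} dv` on the Heisenberg group. -/
def muWD {n : ℕ} (p β : ℝ) (g : Hn n → ℝ) : Measure (Hn n) :=
  volume.withDensity (fun v => ENNReal.ofReal (|g v| ^ p * Hnorm v ^ (β * p)))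

/-- The best constant `C_{Q,α,β,p,q'}` of the Stein–Weiss inequality with full weights. -/
def SWbestConst (n : ℕ) (p q lam α β : ℝ) : ℝ≥0∞ :=
  sSup { c : ℝ≥0∞ | ∃ g : Hn n → ℝ, Measurable g ∧ (∀ v, 0 ≤ g v) ∧
    eLpNorm (fun v => g v * Hnorm v ^ β) (ENNReal.ofReal p) volume = 1 ∧
    c = eLpNorm (fun u => Ilam lam g u * Hnorm u ^ (-α)) (ENNReal.ofReal q) volume }

lemma znorm_eq {n : ℕ} (z : Fin n → ℂ) : znorm z = ‖WithLp.toLp 2 z‖ := by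
  simp [znorm, EuclideanSpace.norm_eq, Complex.normSq_eq_norm_sq]

lemma znorm_nonneg {n : ℕ} (z : Fin n → ℂ) : 0 ≤ znorm z := Real.sqrt_nonneg _

lemma Hnorm_nonneg {n : ℕ} (u : Hn n) : 0 ≤ Hnorm u := by
  unfold Hnorm; positivity

lemma Hnorm_pow {n : ℕ} (u : Hn n) : Hnorm u ^ 4 = znorm u.1 ^ 4 + u.2 ^ 2 := by
  unfold Hnorm
  rw [← Real.rpow_natCast, ← Real.rpow_mul (by positivity)]
  norm_num

lemma Hdist_nonneg {n : ℕ} (u v : Hn n) : 0 ≤ Hdist u v := Hnorm_nonneg _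

lemma continuous_znorm {n : ℕ} : Continuous (znorm : (Fin n → ℂ) → ℝ) := by
  unfold znorm
  refine Real.continuous_sqrt.comp (continuous_finsetSum _ fun j _ => ?_)
  exact Complex.continuous_normSq.comp (continuous_apply j)

lemma continuous_Hnorm {n : ℕ} : Continuous (Hnorm : Hn n → ℝ) := by
  unfold Hnorm
  refine Continuous.rpow_const ?_ (fun x => Or.inr (by norm_num))
  exact ((continuous_znorm.comp continuous_fst).pow 4).add (continuous_snd.pow 2)

lemma continuous_Hdist {n : ℕ} : Continuous (fun x : Hn n × Hn n => Hdist x.1 x.2) := by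
  unfold Hdist
  refine continuous_Hnorm.comp ?_
  unfold Hmul Hinv
  fun_prop

lemma znorm_le_Hnorm {n : ℕ} (u : Hn n) : znorm u.1 ≤ Hnorm u := by
  refine le_of_pow_le_pow_left₀ (n := 4) (by norm_num) (Hnorm_nonneg _) ?_
  rw [Hnorm_pow]; nlinarith [sq_nonneg u.2]

lemma abs_snd_le_Hnorm {n : ℕ} (u : Hn n) : |u.2| ≤ Hnorm u ^ 2 := by
  refine abs_le_of_sq_le_sq ?_ (by positivity)
  rw [← pow_mul, Hnorm_pow]
  have := znorm_nonneg u.1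
  have : 0 ≤ znorm u.1 ^ 4 := by positivity
  linarith

lemma Hnorm_mul_le {n : ℕ} (u w : Hn n) : Hnorm (Hmul u w) ≤ 2 * (Hnorm u + Hnorm w) := by
  have a0 := Hnorm_nonneg u
  have b0 := Hnorm_nonneg w
  refine le_of_pow_le_pow_left₀ (n := 4) (by norm_num) (by positivity) ?_
  rw [Hnorm_pow]
  have h1 : znorm (Hmul u w).1 ≤ Hnorm u + Hnorm w := by
    have : znorm (Hmul u w).1 ≤ znorm u.1 + znorm w.1 := by
      simp only [znorm_eq, Hmul, WithLp.toLp_add]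
      exact norm_add_le _ _
    linarith [znorm_le_Hnorm u, znorm_le_Hnorm w]
  have h2 : |(∑ j, u.1 j * (starRingEnd ℂ) (w.1 j)).im| ≤ znorm u.1 * znorm w.1 := by
    have e : (∑ j, u.1 j * (starRingEnd ℂ) (w.1 j)) =
        inner ℂ (WithLp.toLp 2 w.1) (WithLp.toLp 2 u.1) := by
      simp [PiLp.inner_apply]
    rw [e, znorm_eq, znorm_eq, mul_comm]
    exact (Complex.abs_im_le_norm _).trans (norm_inner_le_norm _ _)
  have h3 : |(Hmul u w).2| ≤ (Hnorm u + Hnorm w) ^ 2 := by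
    have h4 : znorm u.1 * znorm w.1 ≤ Hnorm u * Hnorm w :=
      mul_le_mul (znorm_le_Hnorm u) (znorm_le_Hnorm w) (znorm_nonneg _) a0
    have h5 := abs_snd_le_Hnorm u
    have h6 := abs_snd_le_Hnorm w
    simp only [Hmul]
    rw [abs_le] at *
    constructor <;> nlinarith
  have h7 : (Hmul u w).2 ^ 2 ≤ (Hnorm u + Hnorm w) ^ 4 := by
    have := pow_le_pow_left₀ (abs_nonneg _) h3 2
    rw [sq_abs] at this
    calc _ ≤ _ := this
      _ = _ := by ring
  have h8 := pow_le_pow_left₀ (znorm_nonneg _) h1 4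
  have : 0 ≤ (Hnorm u + Hnorm w) ^ 4 := by positivity
  nlinarith

lemma Hdist_comm {n : ℕ} (u v : Hn n) : Hdist u v = Hdist v u := by
  have e : Hmul (Hinv v) u = Hinv (Hmul (Hinv u) v) := by
    unfold Hmul Hinv
    ext1
    · simp
    · simp only [Pi.neg_apply, neg_mul, Finset.sum_neg_distrib, Complex.neg_im, Complex.im_sum,
        Complex.mul_im, Complex.conj_re, Complex.conj_im]
      have : ∑ i, ((v.1 i).re * -(u.1 i).im + (v.1 i).im * (u.1 i).re)
        = - ∑ i, ((u.1 i).re * -(v.1 i).im + (u.1 i).im * (v.1 i).re) := by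
        rw [← Finset.sum_neg_distrib]
        exact Finset.sum_congr rfl fun i _ => by ring
      rw [this]; ring
  have e2 : ∀ w : Hn n, Hnorm (Hinv w) = Hnorm w := by
    intro w; simp [Hnorm, Hinv, znorm]
  unfold Hdist
  rw [e, e2]

lemma Hmul_Hinv {n : ℕ} (u v : Hn n) : Hmul u (Hmul (Hinv u) v) = v := by
  unfold Hmul Hinv
  ext1
  · simp
  · simp only [Pi.neg_apply, neg_mul, Finset.sum_neg_distrib, Complex.neg_im, Complex.im_sum,
        Complex.mul_im, Complex.conj_re, Complex.conj_im, Pi.add_apply, Complex.add_re,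
        Complex.add_im, Complex.neg_re, Complex.neg_im]
    have : ∑ i, ((u.1 i).re * -(-(u.1 i).im + (v.1 i).im) + (u.1 i).im * (-(u.1 i).re + (v.1 i).re))
        = ∑ i, ((u.1 i).re * -(v.1 i).im + (u.1 i).im * (v.1 i).re) :=
      Finset.sum_congr rfl fun i _ => by ring
    rw [this]; ring

lemma Hnorm_le_right {n : ℕ} (u v : Hn n) : Hnorm v ≤ 2 * (Hnorm u + Hdist u v) := by
  have := Hnorm_mul_le u (Hmul (Hinv u) v)
  rwa [Hmul_Hinv] at this

lemma Hnorm_le_left {n : ℕ} (u v : Hn n) : Hnorm u ≤ 2 * (Hnorm v + Hdist u v) := by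
  rw [Hdist_comm]; exact Hnorm_le_right v u

lemma Hdist_zero {n : ℕ} (v : Hn n) : Hdist 0 v = Hnorm v := by
  simp [Hdist, Hmul, Hinv]

/-- translation invariance -/
lemma lintegral_Hdist {n : ℕ} (φ : ℝ → ℝ≥0∞) (hφ : Measurable φ) (u : Hn n) :
    ∫⁻ v, φ (Hdist u v) = ∫⁻ v : Hn n, φ (Hnorm v) := by
  have key : ∀ (a : Hn n) (G : Hn n → ℝ≥0∞), Measurable G →
      ∫⁻ v, G (Hmul a v) = ∫⁻ v, G v := by
    intro a G hG
    have hm : Measurable (fun v : Hn n => Hmul a v) := by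
      apply Continuous.measurable
      unfold Hmul; fun_prop
    rw [Measure.volume_eq_prod, lintegral_prod (fun v => G (Hmul a v)) (hG.comp hm).aemeasurable,
      lintegral_prod _ hG.aemeasurable]
    simp only [Hmul, Function.comp]
    have : ∀ z : Fin n → ℂ, ∫⁻ t : ℝ, G (a.1 + z, a.2 + t + 2 * (∑ j, a.1 j * (starRingEnd ℂ) (z j)).im)
        = ∫⁻ t : ℝ, G (a.1 + z, t) := by
      intro z
      have := lintegral_add_left_eq_self (μ := (volume : Measure ℝ)) (fun t => G (a.1 + z, t))
        (a.2 + 2 * (∑ j, a.1 j * (starRingEnd ℂ) (z j)).im)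
      rw [← this]
      refine lintegral_congr fun t => ?_
      congr 2; ring
    simp_rw [this]
    exact lintegral_add_left_eq_self (μ := (volume : Measure (Fin n → ℂ)))
      (fun z => ∫⁻ t : ℝ, G (z, t)) a.1
  exact key (Hinv u) (fun v => φ (Hnorm v)) (hφ.comp continuous_Hnorm.measurable)

lemma volume_Hnorm_lt (n : ℕ) : ∃ V : ℝ, 0 ≤ V ∧ ∀ R : ℝ, 0 ≤ R →
    volume {v : Hn n | Hnorm v < R} ≤ ENNReal.ofReal (V * R ^ (2 * (n : ℝ) + 2)) := by
  refine ⟨Real.pi ^ n * 2, by positivity, fun R hR => ?_⟩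
  have hsub : {v : Hn n | Hnorm v < R} ⊆
      (Set.univ.pi fun _ : Fin n => Metric.ball (0 : ℂ) R) ×ˢ (Metric.ball (0 : ℝ) (R ^ 2)) := by
    intro v hv
    have hv : Hnorm v < R := hv
    refine ⟨fun j _ => ?_, ?_⟩
    · rw [mem_ball_zero_iff]
      refine lt_of_le_of_lt ?_ ((znorm_le_Hnorm v).trans_lt hv)
      rw [znorm_eq]
      exact PiLp.norm_apply_le (WithLp.toLp 2 v.1) j
    · rw [mem_ball_zero_iff, Real.norm_eq_abs]
      refine (abs_snd_le_Hnorm v).trans_lt ?_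
      exact pow_lt_pow_left₀ hv (Hnorm_nonneg _) (by norm_num)
  refine (measure_mono hsub).trans (le_of_eq ?_)
  rw [Measure.volume_eq_prod, Measure.prod_prod, volume_pi_pi]
  simp only [Complex.volume_ball, Finset.prod_const, Finset.card_univ, Fintype.card_fin,
    Real.volume_ball]
  have : (ENNReal.ofReal R ^ 2 * (NNReal.pi : ℝ≥0∞)) = ENNReal.ofReal (R ^ 2 * Real.pi) := by
    rw [ENNReal.ofReal_mul (by positivity), ENNReal.ofReal_pow hR]
    congr 1
    rw [← NNReal.coe_real_pi, ENNReal.ofReal_coe_nnreal]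
  rw [this, ← ENNReal.ofReal_pow (by positivity), ← ENNReal.ofReal_mul (by positivity)]
  congr 1
  have : R ^ (2 * (n : ℝ) + 2) = R ^ (2 * n + 2) := by
    rw [← Real.rpow_natCast]; push_cast; rfl
  rw [this, mul_pow]; ring

lemma ae_Hnorm_pos (n : ℕ) : ∀ᵐ v : Hn n, 0 < Hnorm v := by
  have h : ∀ v : Hn n, v ≠ 0 → 0 < Hnorm v := by
    intro v hv
    refine lt_of_le_of_ne (Hnorm_nonneg v) fun h => hv ?_
    have h1 := znorm_le_Hnorm v
    have h2 := abs_snd_le_Hnorm v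
    rw [← h] at h1 h2
    have h3 : znorm v.1 = 0 := le_antisymm h1 (znorm_nonneg _)
    rw [znorm_eq, norm_eq_zero] at h3
    ext1
    · exact (WithLp.toLp_eq_zero 2).1 h3
    · exact abs_eq_zero.1 (le_antisymm (by simpa using h2) (abs_nonneg _))
  have : volume ({0} : Set (Hn n)) = 0 := by
    rw [show ({0} : Set (Hn n)) = ({0} : Set (Fin n → ℂ)) ×ˢ ({0} : Set ℝ) by
      ext x; simp [Prod.ext_iff], Measure.volume_eq_prod, Measure.prod_prod]
    simp
  filter_upwards [compl_mem_ae_iff.2 this] with v hv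
  exact h v hv

lemma ae_Hdist_pos {n : ℕ} (u : Hn n) : ∀ᵐ v : Hn n, 0 < Hdist u v := by
  have hm : MeasurableSet {x : ℝ | x ≤ 0} := measurableSet_Iic
  have h := lintegral_Hdist (Set.indicator {x : ℝ | x ≤ 0} 1) (measurable_one.indicator hm) u
  have h2 : ∫⁻ v : Hn n, Set.indicator {x : ℝ | x ≤ 0} (1 : ℝ → ℝ≥0∞) (Hnorm v) = 0 := by
    refine (lintegral_eq_zero_iff ((measurable_one.indicator hm).comp continuous_Hnorm.measurable)).2 ?_
    filter_upwards [ae_Hnorm_pos n] with v hv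
    simp [hv]
  have hd : Measurable (fun v => Hdist u v) :=
    (continuous_Hdist.comp (by fun_prop : Continuous fun v : Hn n => (u, v))).measurable
  rw [h2] at h
  replace h := (lintegral_eq_zero_iff ((measurable_one.indicator hm).comp hd)).1 h
  filter_upwards [h] with v hv
  by_contra hc
  simp [not_lt.1 hc] at hv

lemma rpow_comp_le {A b y : ℝ} (e : ℝ) (hA : 1 ≤ A) (hb : 0 < b) (hy : 0 < y) (h1 : y ≤ A * b)
    (h2 : b ≤ A * y) : y ^ e ≤ A ^ |e| * b ^ e := by
  have hA0 : 0 < A := by linarith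
  rcases le_total 0 e with he | he
  · rw [abs_of_nonneg he, ← Real.mul_rpow hA0.le hb.le]
    exact Real.rpow_le_rpow hy.le h1 he
  · have := Real.rpow_le_rpow_of_nonpos hb h2 he
    rw [Real.mul_rpow hA0.le hy.le] at this
    rw [abs_of_nonpos he, Real.rpow_neg hA0.le]
    rw [← inv_mul_le_iff₀ (by positivity), inv_inv]
    exact this

lemma summable_shell {a w : ℝ} (ha : 0 < a) (hw : a - w < 0) :
    Summable (fun k : ℤ => ((2 : ℝ) ^ k) ^ a * (max 1 ((2 : ℝ) ^ k)) ^ (-w)) := by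
  apply Summable.of_nat_of_neg
  · have : (fun k : ℕ => ((2 : ℝ) ^ (k : ℤ)) ^ a * (max 1 ((2 : ℝ) ^ (k : ℤ))) ^ (-w))
        = fun k : ℕ => ((2 : ℝ) ^ (a - w)) ^ k := by
      ext k
      have h1 : (1 : ℝ) ≤ 2 ^ k := one_le_pow₀ (by norm_num)
      rw [zpow_natCast, max_eq_right h1, ← Real.rpow_add (by positivity), ← Real.rpow_natCast,
        ← Real.rpow_natCast, ← Real.rpow_mul (by norm_num), ← Real.rpow_mul (by norm_num)]
      ring_nf
    rw [this]
    exact summable_geometric_of_lt_one (by positivity)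
      (Real.rpow_lt_one_of_one_lt_of_neg (by norm_num) hw)
  · have : (fun k : ℕ => ((2 : ℝ) ^ (-(k : ℤ))) ^ a * (max 1 ((2 : ℝ) ^ (-(k : ℤ)))) ^ (-w))
        = fun k : ℕ => ((2 : ℝ) ^ (-a)) ^ k := by
      ext k
      have h1 : (2 : ℝ) ^ (-(k : ℤ)) ≤ 1 := by
        rw [zpow_neg, zpow_natCast]
        exact inv_le_one_of_one_le₀ (one_le_pow₀ (by norm_num))
      rw [max_eq_left h1, Real.one_rpow, mul_one, ← Real.rpow_natCast, ← Real.rpow_intCast,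
        ← Real.rpow_mul (by norm_num), ← Real.rpow_mul (by norm_num)]
      push_cast
      ring_nf
    rw [this]
    exact summable_geometric_of_lt_one (by positivity)
      (Real.rpow_lt_one_of_one_lt_of_neg (by norm_num) (by linarith))

lemma lintegral_power {n : ℕ} {Q s w : ℝ} (hQ : Q = 2 * n + 2) (hs : s < Q) (hw : Q < s + w) :
    ∃ c : ℝ, 0 ≤ c ∧ ∀ ρ : ℝ, 0 < ρ →
      ∫⁻ v : Hn n, ENNReal.ofReal (Hnorm v ^ (-s) * (max ρ (Hnorm v)) ^ (-w))
        ≤ ENNReal.ofReal (c * ρ ^ (Q - s - w)) := by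
  obtain ⟨V, hV, hvol⟩ := volume_Hnorm_lt n
  rw [← hQ] at hvol
  set t : ℤ → ℝ := fun k => ((2 : ℝ) ^ k) ^ (Q - s) * (max 1 ((2 : ℝ) ^ k)) ^ (-w) with ht
  have hsum : Summable t := summable_shell (by linarith) (by linarith)
  have ht0 : ∀ k, 0 ≤ t k := fun k => by positivity
  set D : ℝ := 2 ^ |-s| * 2 ^ |-w| * V * 2 ^ Q with hD
  have hD0 : 0 ≤ D := by positivity
  refine ⟨D * ∑' k, t k, mul_nonneg hD0 (tsum_nonneg ht0), fun ρ hρ => ?_⟩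
  set Sh : ℤ → Set (Hn n) := fun k => {v | ρ * 2 ^ k ≤ Hnorm v ∧ Hnorm v < 2 * (ρ * 2 ^ k)} with hSh
  have hcov : ∀ᵐ v : Hn n, v ∈ ⋃ k, Sh k := by
    filter_upwards [ae_Hnorm_pos n] with v hv
    obtain ⟨k, hk⟩ := exists_mem_Ico_zpow (x := Hnorm v / ρ) (y := (2 : ℝ)) (by positivity)
      (by norm_num)
    refine Set.mem_iUnion.2 ⟨k, ?_, ?_⟩
    · have := hk.1
      rw [le_div_iff₀ hρ] at this
      linarith
    · have := hk.2
      rw [div_lt_iff₀ hρ, zpow_add₀ (by norm_num)] at this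
      simp at this
      linarith
  have hms : ∀ k, MeasurableSet (Sh k) := fun k =>
    (measurableSet_le measurable_const continuous_Hnorm.measurable).inter
      (measurableSet_lt continuous_Hnorm.measurable measurable_const)
  set F : Hn n → ℝ≥0∞ := fun v => ENNReal.ofReal (Hnorm v ^ (-s) * (max ρ (Hnorm v)) ^ (-w))
  calc ∫⁻ v, F v = ∫⁻ v in ⋃ k, Sh k, F v := by
        rw [Measure.restrict_eq_self_of_ae_mem hcov]
    _ ≤ ∑' k, ∫⁻ v in Sh k, F v := lintegral_iUnion_le _ _
    _ ≤ ∑' k, ENNReal.ofReal (D * ρ ^ (Q - s - w) * t k) := by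
        refine ENNReal.tsum_le_tsum fun k => ?_
        set b := ρ * (2 : ℝ) ^ k with hb
        have hb0 : 0 < b := by positivity
        have hmax : max ρ b = ρ * max 1 ((2 : ℝ) ^ k) := by
          rw [mul_max_of_nonneg _ _ hρ.le, mul_one]
        calc ∫⁻ v in Sh k, F v
            ≤ ∫⁻ v in Sh k, ENNReal.ofReal ((2 ^ |-s| * b ^ (-s)) * (2 ^ |-w| * (max ρ b) ^ (-w))) := by
              refine setLIntegral_mono' (hms k) fun v hv => ?_
              apply ENNReal.ofReal_le_ofReal
              have hv0 : 0 < Hnorm v := hb0.trans_le hv.1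
              refine mul_le_mul (rpow_comp_le _ (by norm_num) hb0 hv0 hv.2.le ?_)
                (rpow_comp_le _ (by norm_num) (by positivity) (by positivity) ?_ ?_)
                (by positivity) (by positivity)
              · linarith [hv.1]
              · refine max_le ?_ ?_
                · linarith [le_max_left ρ b]
                · linarith [le_max_right ρ b, hv.2]
              · refine max_le ?_ ?_
                · linarith [le_max_left ρ (Hnorm v)]
                · linarith [le_max_right ρ (Hnorm v), hv.1]
          _ = ENNReal.ofReal ((2 ^ |-s| * b ^ (-s)) * (2 ^ |-w| * (max ρ b) ^ (-w))) * volume (Sh k) := by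
              rw [setLIntegral_const]
          _ ≤ ENNReal.ofReal ((2 ^ |-s| * b ^ (-s)) * (2 ^ |-w| * (max ρ b) ^ (-w))) *
                ENNReal.ofReal (V * (2 * b) ^ Q) := by
              gcongr
              exact (measure_mono fun v hv => hv.2).trans (hvol _ (by positivity))
          _ = ENNReal.ofReal (D * ρ ^ (Q - s - w) * t k) := by
              rw [← ENNReal.ofReal_mul (by positivity)]
              congr 1
              rw [hmax, Real.mul_rpow (by norm_num) hb0.le, Real.mul_rpow (y := max 1 ((2:ℝ) ^ k)) hρ.le (by positivity)]
              have e1 : b ^ (-s) * b ^ Q = ρ ^ (Q - s) * ((2 : ℝ) ^ k) ^ (Q - s) := by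
                rw [← Real.rpow_add hb0, ← Real.mul_rpow hρ.le (by positivity)]
                congr 1; ring
              have e2 : ρ ^ (Q - s - w) = ρ ^ (Q - s) * ρ ^ (-w) := by
                rw [← Real.rpow_add hρ]; congr 1
              rw [e2]
              simp only [ht, hD]
              linear_combination (2 ^ |-s| * 2 ^ |-w| * V * 2 ^ Q * ρ ^ (-w) * max 1 ((2:ℝ) ^ k) ^ (-w)) * e1
    _ = ENNReal.ofReal (D * (∑' k, t k) * ρ ^ (Q - s - w)) := by
        rw [← ENNReal.ofReal_tsum_of_nonneg (fun k => by have := ht0 k; positivity) (hsum.mul_left _),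
          tsum_mul_left]
        congr 1; ring

lemma schur_test {X : Type*} [MeasurableSpace X] {μ : Measure X} [SFinite μ] {p p' : ℝ}
    (hpp : p.HolderConjugate p') {N : X → X → ℝ≥0∞} (hN : Measurable (Function.uncurry N))
    {w : X → ℝ≥0∞} (hw : Measurable w) (hw0 : ∀ᵐ x ∂μ, w x ≠ 0 ∧ w x ≠ ⊤) {c₁ c₂ : ℝ≥0∞}
    (h1 : ∀ᵐ u ∂μ, ∫⁻ v, N u v * w v ^ (-p') ∂μ ≤ c₁ * w u ^ (-p'))
    (h2 : ∀ᵐ v ∂μ, ∫⁻ u, N u v * w u ^ (-p) ∂μ ≤ c₂ * w v ^ (-p))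
    {F : X → ℝ≥0∞} (hF : Measurable F) :
    ∫⁻ u, (∫⁻ v, N u v * F v ∂μ) ^ p ∂μ ≤ c₁ ^ (p / p') * c₂ * ∫⁻ v, F v ^ p ∂μ := by
  have hp0 : 0 < p := hpp.pos
  have hp'0 : 0 < p' := hpp.symm.pos
  have hsum : 1 / p + 1 / p' = 1 := by have := hpp.inv_add_inv_eq_one; simpa using this
  have hNu : ∀ u, Measurable (N u) := fun u => hN.comp measurable_prodMk_left
  have hNv : ∀ v, Measurable (fun u => N u v) := fun v => hN.comp measurable_prodMk_right
  have hpt : ∀ᵐ u ∂μ, (∫⁻ v, N u v * F v ∂μ) ^ p ≤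
      c₁ ^ (p / p') * ∫⁻ v, w u ^ (-p) * (N u v * (F v ^ p * w v ^ p)) ∂μ := by
    filter_upwards [h1, hw0] with u hu hwu
    have e1 : ∫⁻ v, N u v * F v ∂μ
        = ∫⁻ v, ((fun v => N u v ^ (1 / p) * (F v * w v)) *
            (fun v => N u v ^ (1 / p') * (w v)⁻¹)) v ∂μ := by
      refine lintegral_congr_ae ?_
      filter_upwards [hw0] with v hv
      simp only [Pi.mul_apply]
      have : N u v = N u v ^ (1 / p) * N u v ^ (1 / p') := by
        rw [← ENNReal.rpow_add_of_nonneg _ _ (by positivity) (by positivity), hsum,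
          ENNReal.rpow_one]
      calc N u v * F v = N u v ^ (1 / p) * N u v ^ (1 / p') * F v * (w v * (w v)⁻¹) := by
            rw [← this, ENNReal.mul_inv_cancel hv.1 hv.2, mul_one]
        _ = _ := by ring
    have hol := ENNReal.lintegral_mul_le_Lp_mul_Lq μ hpp
      (f := fun v => N u v ^ (1 / p) * (F v * w v)) (g := fun v => N u v ^ (1 / p') * (w v)⁻¹)
      (((hNu u).pow_const _).mul (hF.mul hw)).aemeasurable
      (((hNu u).pow_const _).mul hw.inv).aemeasurable
    rw [← e1] at hol
    have e2 : ∀ v, (N u v ^ (1 / p) * (F v * w v)) ^ p = N u v * (F v ^ p * w v ^ p) := by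
      intro v
      rw [ENNReal.mul_rpow_of_nonneg _ _ hp0.le, ← ENNReal.rpow_mul, one_div_mul_cancel hp0.ne',
        ENNReal.rpow_one, ENNReal.mul_rpow_of_nonneg _ _ hp0.le]
    have e3 : ∀ v, (N u v ^ (1 / p') * (w v)⁻¹) ^ p' = N u v * w v ^ (-p') := by
      intro v
      rw [ENNReal.mul_rpow_of_nonneg _ _ hp'0.le, ← ENNReal.rpow_mul, one_div_mul_cancel hp'0.ne',
        ENNReal.rpow_one, ENNReal.inv_rpow, ENNReal.rpow_neg]
    simp only [e2, e3] at hol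
    have hol2 := ENNReal.rpow_le_rpow hol hp0.le
    rw [ENNReal.mul_rpow_of_nonneg _ _ hp0.le, ← ENNReal.rpow_mul, one_div_mul_cancel hp0.ne',
        ENNReal.rpow_one, ← ENNReal.rpow_mul, one_div_mul_eq_div] at hol2
    refine hol2.trans ?_
    rw [lintegral_const_mul _ (by exact (hNu u).mul ((hF.pow_const _).mul (hw.pow_const _)))]
    have h3 : (∫⁻ v, N u v * w v ^ (-p') ∂μ) ^ (p / p') ≤ c₁ ^ (p / p') * w u ^ (-p) := by
      refine (ENNReal.rpow_le_rpow hu (by positivity)).trans (le_of_eq ?_)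
      rw [ENNReal.mul_rpow_of_nonneg _ _ (by positivity), ← ENNReal.rpow_mul]
      congr 2; field_simp
    calc _ ≤ (∫⁻ v, N u v * (F v ^ p * w v ^ p) ∂μ) * (c₁ ^ (p / p') * w u ^ (-p)) := by gcongr
      _ = _ := by ring
  have hmeas : Measurable (Function.uncurry fun u v => w u ^ (-p) * (N u v * (F v ^ p * w v ^ p))) :=
    ((hw.pow_const _).comp measurable_fst).mul
      (hN.mul (((hF.pow_const _).mul (hw.pow_const _)).comp measurable_snd))
  calc ∫⁻ u, (∫⁻ v, N u v * F v ∂μ) ^ p ∂μ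
      ≤ ∫⁻ u, c₁ ^ (p / p') * ∫⁻ v, w u ^ (-p) * (N u v * (F v ^ p * w v ^ p)) ∂μ ∂μ :=
        lintegral_mono_ae hpt
    _ = c₁ ^ (p / p') * ∫⁻ u, ∫⁻ v, w u ^ (-p) * (N u v * (F v ^ p * w v ^ p)) ∂μ ∂μ :=
        lintegral_const_mul _ hmeas.lintegral_prod_right'
    _ = c₁ ^ (p / p') * ∫⁻ v, ∫⁻ u, w u ^ (-p) * (N u v * (F v ^ p * w v ^ p)) ∂μ ∂μ := by
        rw [lintegral_lintegral_swap hmeas.aemeasurable]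
    _ ≤ c₁ ^ (p / p') * ∫⁻ v, c₂ * F v ^ p ∂μ := by
        gcongr 1
        refine lintegral_mono_ae ?_
        filter_upwards [h2] with v hv
        calc ∫⁻ u, w u ^ (-p) * (N u v * (F v ^ p * w v ^ p)) ∂μ
            = ∫⁻ u, (F v ^ p * w v ^ p) * (N u v * w u ^ (-p)) ∂μ :=
              lintegral_congr fun u => by ring
          _ = (F v ^ p * w v ^ p) * ∫⁻ u, N u v * w u ^ (-p) ∂μ :=
              lintegral_const_mul _ ((hNv v).mul (hw.pow_const _))
          _ ≤ (F v ^ p * w v ^ p) * (c₂ * w v ^ (-p)) := by gcongr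
          _ = c₂ * F v ^ p * (w v ^ p * (w v ^ p)⁻¹) := by rw [ENNReal.rpow_neg]; ring
          _ ≤ c₂ * F v ^ p * 1 := by gcongr; exact ENNReal.mul_inv_le_one _
          _ = _ := mul_one _
    _ = _ := by rw [lintegral_const_mul _ (hF.pow_const _)]; ring

/-- off-diagonal kernel -/
def Mker {n : ℕ} (A B lam : ℝ) (u v : Hn n) : ℝ :=
  Hnorm u ^ (-A) * Hnorm v ^ (-B) * (max (Hnorm u) (Hnorm v)) ^ (-lam)

lemma Mker_nonneg {n : ℕ} (A B lam : ℝ) (u v : Hn n) : 0 ≤ Mker A B lam u v := by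
  have := Hnorm_nonneg u
  have := Hnorm_nonneg v
  unfold Mker; positivity

lemma measurable_Mker {n : ℕ} (A B lam : ℝ) :
    Measurable (Function.uncurry (Mker A B lam : Hn n → Hn n → ℝ)) := by
  have h : Measurable (Hnorm : Hn n → ℝ) := continuous_Hnorm.measurable
  unfold Mker Function.uncurry
  fun_prop

lemma Mker_int {n : ℕ} {Q B lam : ℝ} (hQ : Q = 2 * n + 2) (hB : B < Q) (hw : Q < B + lam) :
    ∃ c : ℝ, 0 ≤ c ∧ ∀ (A : ℝ) (u : Hn n), 0 < Hnorm u →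
      ∫⁻ v : Hn n, ENNReal.ofReal (Mker A B lam u v)
        ≤ ENNReal.ofReal (c * Hnorm u ^ (Q - A - B - lam)) := by
  obtain ⟨c, hc, h⟩ := lintegral_power hQ hB hw
  refine ⟨c, hc, fun A u hu => ?_⟩
  have hm : Measurable (Hnorm : Hn n → ℝ) := continuous_Hnorm.measurable
  calc _ = ∫⁻ v : Hn n, ENNReal.ofReal (Hnorm u ^ (-A)) *
          ENNReal.ofReal (Hnorm v ^ (-B) * (max (Hnorm u) (Hnorm v)) ^ (-lam)) := by
        refine lintegral_congr fun v => ?_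
        rw [← ENNReal.ofReal_mul (by positivity), Mker, mul_assoc]
    _ = ENNReal.ofReal (Hnorm u ^ (-A)) *
          ∫⁻ v : Hn n, ENNReal.ofReal (Hnorm v ^ (-B) * (max (Hnorm u) (Hnorm v)) ^ (-lam)) := by
        rw [lintegral_const_mul _ (by fun_prop)]
    _ ≤ ENNReal.ofReal (Hnorm u ^ (-A)) * ENNReal.ofReal (c * Hnorm u ^ (Q - B - lam)) := by
        gcongr; exact h _ hu
    _ = _ := by
        rw [← ENNReal.ofReal_mul (by positivity)]
        congr 1
        rw [show Q - A - B - lam = -A + (Q - B - lam) by ring, Real.rpow_add hu]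
        ring

lemma M_bound {n : ℕ} {Q p p' q A B lam : ℝ} (hQ : Q = 2 * n + 2) (hpp : p.HolderConjugate p')
    (hpq : p < q) (hA : A < Q / q) (hB : B < Q / p') (hbal : A + B + lam = Q / p' + Q / q) :
    ∃ C : ℝ≥0∞, C ≠ ⊤ ∧ ∀ F : Hn n → ℝ≥0∞, Measurable F → ∫⁻ v, F v ^ p ≤ 1 →
      ∫⁻ u, (∫⁻ v, ENNReal.ofReal (Mker A B lam u v) * F v) ^ q ≤ C := by
  have hQ0 : 0 < Q := by rw [hQ]; positivity
  have hp0 : 0 < p := hpp.pos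
  have hp1 : 1 < p := hpp.lt
  have hp'0 : 0 < p' := hpp.symm.pos
  have hq0 : 0 < q := hp0.trans hpq
  have hsum : 1 / p + 1 / p' = 1 := by have := hpp.inv_add_inv_eq_one; simpa using this
  have hsumQ : Q / p + Q / p' = Q := by
    have : Q / p + Q / p' = Q * (1 / p + 1 / p') := by ring
    rw [this, hsum, mul_one]
  have hm : Measurable (Hnorm : Hn n → ℝ) := continuous_Hnorm.measurable
  have hBp : B * p' < Q := by rwa [lt_div_iff₀ hp'0] at hB
  have hBp2 : Q < B * p' + lam * p' := by
    have : Q / p' < B + lam := by linarith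
    rw [div_lt_iff₀ hp'0] at this
    linarith
  obtain ⟨c, hc, hint⟩ := Mker_int (n := n) hQ hBp hBp2
  set A' := A + Q / p - Q / q with hA'
  have hA'p : A' < Q / p := by linarith
  obtain ⟨d₁, hd₁, hint₁⟩ := Mker_int (n := n) (B := B + Q / p) (lam := lam) hQ (by linarith) (by linarith)
  obtain ⟨d₂, hd₂, hint₂⟩ := Mker_int (n := n) (B := A' + Q / p') (lam := lam) hQ (by linarith) (by linarith)
  refine ⟨ENNReal.ofReal ((c ^ (1 / p')) ^ (q - p)) * (ENNReal.ofReal d₁ ^ (p / p') * ENNReal.ofReal d₂),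
    by finiteness, fun F hF hF1 => ?_⟩
  -- pointwise bound
  have hpt : ∀ u : Hn n, 0 < Hnorm u → ∫⁻ v, ENNReal.ofReal (Mker A B lam u v) * F v
      ≤ ENNReal.ofReal (c ^ (1 / p') * Hnorm u ^ (-(Q / q))) := by
    intro u hu
    have hmk : Measurable (fun v => ENNReal.ofReal (Mker A B lam u v)) :=
      ((measurable_Mker A B lam).comp measurable_prodMk_left).ennreal_ofReal
    have hol := ENNReal.lintegral_mul_le_Lp_mul_Lq volume hpp.symm (f := fun v => ENNReal.ofReal (Mker A B lam u v))
      (g := F) hmk.aemeasurable hF.aemeasurable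
    refine hol.trans ?_
    have e1 : (∫⁻ v, F v ^ p) ^ (1 / p) ≤ 1 := by
      calc _ ≤ (1 : ℝ≥0∞) ^ (1 / p) := ENNReal.rpow_le_rpow hF1 (by positivity)
        _ = 1 := ENNReal.one_rpow _
    have e2 : ∫⁻ v, ENNReal.ofReal (Mker A B lam u v) ^ p' = ∫⁻ v, ENNReal.ofReal (Mker (A * p') (B * p') (lam * p') u v) := by
      refine lintegral_congr fun v => ?_
      have := Hnorm_nonneg v
      rw [ENNReal.ofReal_rpow_of_nonneg (Mker_nonneg _ _ _ _ _) hp'0.le]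
      congr 1
      unfold Mker
      rw [Real.mul_rpow (by positivity) (by positivity), Real.mul_rpow (by positivity) (by positivity),
        ← Real.rpow_mul (by positivity), ← Real.rpow_mul (by positivity), ← Real.rpow_mul (by positivity)]
      ring_nf
    calc _ ≤ (∫⁻ v, ENNReal.ofReal (Mker A B lam u v) ^ p') ^ (1 / p') * 1 := by gcongr
      _ ≤ (ENNReal.ofReal (c * Hnorm u ^ (Q - A * p' - B * p' - lam * p'))) ^ (1 / p') := by
        rw [mul_one, e2]
        exact ENNReal.rpow_le_rpow (hint _ u hu) (by positivity)
      _ = _ := by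
        rw [ENNReal.ofReal_rpow_of_nonneg (by positivity) (by positivity),
          Real.mul_rpow hc (by positivity), ← Real.rpow_mul hu.le]
        congr 3
        have : (Q - A * p' - B * p' - lam * p') * (1 / p') = Q / p' - (A + B + lam) := by
          field_simp
          ring
        rw [this, hbal]; ring
  -- Schur
  set γ := Q / (p * p') with hγ
  have hγp : γ * p = Q / p' := by rw [hγ]; field_simp
  have hγp' : γ * p' = Q / p := by rw [hγ]; field_simp
  have hwpow : ∀ u : Hn n, 0 < Hnorm u → ∀ e : ℝ, ENNReal.ofReal (Hnorm u ^ γ) ^ e = ENNReal.ofReal (Hnorm u ^ (γ * e)) := by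
    intro u hu e
    rw [ENNReal.ofReal_rpow_of_pos (by positivity), ← Real.rpow_mul hu.le]
  have hsch := schur_test (μ := (volume : Measure (Hn n))) hpp
    (N := fun u v => ENNReal.ofReal (Mker A' B lam u v))
    (measurable_Mker A' B lam).ennreal_ofReal
    (w := fun u => ENNReal.ofReal (Hnorm u ^ γ)) (by fun_prop)
    (by
      filter_upwards [ae_Hnorm_pos n] with u hu
      exact ⟨(ENNReal.ofReal_pos.2 (by positivity)).ne', ENNReal.ofReal_ne_top⟩)
    (c₁ := ENNReal.ofReal d₁) (c₂ := ENNReal.ofReal d₂)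
    (by
      filter_upwards [ae_Hnorm_pos n] with u hu
      rw [hwpow u hu, ← ENNReal.ofReal_mul hd₁]
      calc _ = ∫⁻ v, ENNReal.ofReal (Mker A' (B + Q / p) lam u v) := by
            refine lintegral_congr_ae ?_
            filter_upwards [ae_Hnorm_pos n] with v hv
            rw [hwpow v hv, ← ENNReal.ofReal_mul (Mker_nonneg _ _ _ _ _)]
            congr 1
            unfold Mker
            rw [show -(B + Q / p) = -B + γ * -p' by rw [← hγp']; ring, Real.rpow_add hv]
            ring
        _ ≤ _ := hint₁ A' u hu
        _ = _ := by
            congr 3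
            rw [mul_neg, hγp', hA']
            linarith)
    (by
      filter_upwards [ae_Hnorm_pos n] with v hv
      rw [hwpow v hv, ← ENNReal.ofReal_mul hd₂]
      calc _ = ∫⁻ u, ENNReal.ofReal (Mker B (A' + Q / p') lam v u) := by
            refine lintegral_congr_ae ?_
            filter_upwards [ae_Hnorm_pos n] with u hu
            rw [hwpow u hu, ← ENNReal.ofReal_mul (Mker_nonneg _ _ _ _ _)]
            congr 1
            unfold Mker
            rw [show -(A' + Q / p') = -A' + γ * -p by rw [← hγp]; ring, Real.rpow_add hu,
              max_comm]
            ring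
        _ ≤ _ := hint₂ B v hv
        _ = _ := by
            congr 3
            rw [mul_neg, hγp, hA']
            linarith)
    hF
  set c' := c ^ (1 / p') with hc'
  have hc'0 : 0 ≤ c' := by positivity
  calc ∫⁻ u, (∫⁻ v, ENNReal.ofReal (Mker A B lam u v) * F v) ^ q
      ≤ ∫⁻ u, ENNReal.ofReal (c' ^ (q - p)) * (∫⁻ v, ENNReal.ofReal (Mker A' B lam u v) * F v) ^ p := by
        refine lintegral_mono_ae ?_
        filter_upwards [ae_Hnorm_pos n] with u hu
        set I := ∫⁻ v, ENNReal.ofReal (Mker A B lam u v) * F v with hI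
        have e1 : ∫⁻ v, ENNReal.ofReal (Mker A' B lam u v) * F v
            = ENNReal.ofReal (Hnorm u ^ (-(Q / p - Q / q))) * I := by
          rw [hI, ← lintegral_const_mul' _ _ ENNReal.ofReal_ne_top]
          refine lintegral_congr fun v => ?_
          rw [← mul_assoc, ← ENNReal.ofReal_mul (by positivity)]
          congr 2
          unfold Mker
          rw [show -A' = -(Q / p - Q / q) + -A by rw [hA']; ring, Real.rpow_add hu]
          ring
        rw [e1, ENNReal.mul_rpow_of_nonneg _ _ hp0.le, ENNReal.ofReal_rpow_of_pos (by positivity),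
          ← Real.rpow_mul hu.le]
        calc I ^ q = I ^ (q - p) * I ^ p := by
              rw [← ENNReal.rpow_add_of_nonneg _ _ (by linarith) hp0.le]; congr 1; ring
          _ ≤ ENNReal.ofReal (c' * Hnorm u ^ (-(Q / q))) ^ (q - p) * I ^ p := by
              gcongr
              exact hpt u hu
          _ = ENNReal.ofReal (c' ^ (q - p)) * (ENNReal.ofReal (Hnorm u ^ (-(Q / p - Q / q) * p)) * I ^ p) := by
              rw [← mul_assoc, ← ENNReal.ofReal_mul (by positivity),
                ENNReal.ofReal_rpow_of_nonneg (by positivity) (by linarith),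
                Real.mul_rpow (by positivity) (by positivity), ← Real.rpow_mul hu.le]
              congr 4
              field_simp
              try ring
    _ = ENNReal.ofReal (c' ^ (q - p)) * ∫⁻ u, (∫⁻ v, ENNReal.ofReal (Mker A' B lam u v) * F v) ^ p := by
        rw [lintegral_const_mul' _ _ ENNReal.ofReal_ne_top]
    _ ≤ ENNReal.ofReal (c' ^ (q - p)) * (ENNReal.ofReal d₁ ^ (p / p') * ENNReal.ofReal d₂ * 1) := by
        gcongr
        refine hsch.trans ?_
        gcongr
    _ = _ := by rw [mul_one]

lemma measurable_Hdist_right {n : ℕ} (u : Hn n) : Measurable (fun v => Hdist u v) :=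
  (continuous_Hdist.comp (by fun_prop : Continuous fun v : Hn n => (u, v))).measurable

lemma lintegral_power_dist {n : ℕ} {Q s w : ℝ} (hQ : Q = 2 * n + 2) (hs : s < Q) (hw : Q < s + w) :
    ∃ c : ℝ, 0 ≤ c ∧ ∀ ρ : ℝ, 0 < ρ → ∀ u : Hn n,
      ∫⁻ v : Hn n, ENNReal.ofReal (Hdist u v ^ (-s) * (max ρ (Hdist u v)) ^ (-w))
        ≤ ENNReal.ofReal (c * ρ ^ (Q - s - w)) := by
  obtain ⟨c, hc, h⟩ := lintegral_power hQ hs hw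
  refine ⟨c, hc, fun ρ hρ u => ?_⟩
  rw [lintegral_Hdist (fun x => ENNReal.ofReal (x ^ (-s) * (max ρ x) ^ (-w))) (by fun_prop) u]
  exact h ρ hρ

lemma HLS_step {n : ℕ} {Q p p' q l : ℝ} (hQ : Q = 2 * n + 2) (hpp : p.HolderConjugate p')
    (hpq : p < q) (hbal : l = Q / p' + Q / q) :
    ∃ a₁ b₁ : ℝ, 0 < a₁ ∧ 0 < b₁ ∧ ∀ F : Hn n → ℝ≥0∞, Measurable F → ∫⁻ v, F v ^ p ≤ 1 →
      ∀ (u : Hn n) (t : ℝ), 0 < t → ENNReal.ofReal t ≤ ∫⁻ v, ENNReal.ofReal (Hdist u v ^ (-l)) * F v →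
      ENNReal.ofReal (t / 2) ≤ ∫⁻ v, (if Hdist u v < a₁ * t ^ (-(q / Q)) ∧
        ENNReal.ofReal (b₁ * t ^ (q / p)) < F v then ENNReal.ofReal (Hdist u v ^ (-l)) * F v else 0) := by
  have hQ0 : 0 < Q := by rw [hQ]; positivity
  have hp0 : 0 < p := hpp.pos
  have hp'0 : 0 < p' := hpp.symm.pos
  have hq0 : 0 < q := hp0.trans hpq
  have hsum : 1 / p + 1 / p' = 1 := by have := hpp.inv_add_inv_eq_one; simpa using this
  have hsumQ : Q / p + Q / p' = Q := by
    have : Q / p + Q / p' = Q * (1 / p + 1 / p') := by ring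
    rw [this, hsum, mul_one]
  have hl0 : 0 < l := by rw [hbal]; positivity
  have hqp : Q / q < Q / p := by gcongr
  have hlQ : l < Q := by linarith
  have hlp : Q < 0 + l * p' := by
    rw [zero_add, hbal, add_mul, div_mul_cancel₀ _ hp'0.ne']
    have : 0 < Q / q * p' := by positivity
    linarith
  obtain ⟨c₁, hc₁, hi₁⟩ := lintegral_power_dist (n := n) (s := 0) (w := l * p') hQ hQ0 hlp
  obtain ⟨c₂, hc₂, hi₂⟩ := lintegral_power_dist (n := n) (s := l) (w := Q) hQ hlQ (by linarith)
  set c₁' := c₁ ^ (1 / p') with hc₁'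
  have hc₁'0 : 0 ≤ c₁' := by positivity
  set a₁ : ℝ := (4 * (c₁' + 1)) ^ (q / Q) with ha₁
  have ha₁0 : 0 < a₁ := by positivity
  set b₁ : ℝ := (4 * (c₂ + 1) * a₁ ^ (Q - l))⁻¹ with hb₁
  have hb₁0 : 0 < b₁ := by positivity
  refine ⟨a₁, b₁, ha₁0, hb₁0, fun F hF hF1 u t ht htI => ?_⟩
  set r := a₁ * t ^ (-(q / Q)) with hr
  set a := b₁ * t ^ (q / p) with ha
  have hr0 : 0 < r := by positivity
  have ha0 : 0 < a := by positivity
  have hdm := measurable_Hdist_right u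
  set I3 := ∫⁻ v, (if Hdist u v < r ∧
        ENNReal.ofReal a < F v then ENNReal.ofReal (Hdist u v ^ (-l)) * F v else 0) with hI3
  have hpt : ∀ v, ENNReal.ofReal (Hdist u v ^ (-l)) * F v ≤
      ENNReal.ofReal ((max r (Hdist u v)) ^ (-l)) * F v +
      (ENNReal.ofReal (a * r ^ Q) * ENNReal.ofReal (Hdist u v ^ (-l) * (max r (Hdist u v)) ^ (-Q)) +
      (if Hdist u v < r ∧
        ENNReal.ofReal a < F v then ENNReal.ofReal (Hdist u v ^ (-l)) * F v else 0)) := by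
    intro v
    have hd := Hdist_nonneg u v
    by_cases h1 : Hdist u v < r
    · by_cases h2 : ENNReal.ofReal a < F v
      · rw [if_pos ⟨h1, h2⟩]
        exact le_add_self.trans' le_add_self
      · refine le_add_self.trans' (le_self_add.trans' ?_)
        rw [max_eq_left h1.le, ← ENNReal.ofReal_mul (by positivity)]
        calc ENNReal.ofReal (Hdist u v ^ (-l)) * F v
            ≤ ENNReal.ofReal (Hdist u v ^ (-l)) * ENNReal.ofReal a := by gcongr; exact not_lt.1 h2
          _ = _ := by
            rw [← ENNReal.ofReal_mul (by positivity)]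
            congr 1
            have : r ^ Q * r ^ (-Q) = 1 := by rw [← Real.rpow_add hr0]; simp
            linear_combination (-a * Hdist u v ^ (-l)) * this
    · refine le_self_add.trans' ?_
      rw [max_eq_right (not_lt.1 h1)]
  have hI1 : ∫⁻ v, ENNReal.ofReal ((max r (Hdist u v)) ^ (-l)) * F v ≤ ENNReal.ofReal (t / 4) := by
    have hol := ENNReal.lintegral_mul_le_Lp_mul_Lq volume hpp.symm
      (f := fun v => ENNReal.ofReal ((max r (Hdist u v)) ^ (-l)))
      (g := F) (by fun_prop) hF.aemeasurable
    refine hol.trans ?_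
    have e1 : (∫⁻ v, F v ^ p) ^ (1 / p) ≤ 1 := by
      calc _ ≤ (1 : ℝ≥0∞) ^ (1 / p) := ENNReal.rpow_le_rpow hF1 (by positivity)
        _ = 1 := ENNReal.one_rpow _
    have e2 : ∫⁻ v, ENNReal.ofReal ((max r (Hdist u v)) ^ (-l)) ^ p'
        = ∫⁻ v, ENNReal.ofReal (Hdist u v ^ (-(0:ℝ)) * (max r (Hdist u v)) ^ (-(l * p'))) := by
      refine lintegral_congr fun v => ?_
      have : 0 < max r (Hdist u v) := lt_max_of_lt_left hr0
      rw [ENNReal.ofReal_rpow_of_nonneg (by positivity) hp'0.le, ← Real.rpow_mul this.le, neg_zero,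
        Real.rpow_zero, one_mul, neg_mul]
    calc _ ≤ (∫⁻ v, ENNReal.ofReal ((max r (Hdist u v)) ^ (-l)) ^ p') ^ (1 / p') * 1 := by gcongr
      _ ≤ (ENNReal.ofReal (c₁ * r ^ (Q - 0 - l * p'))) ^ (1 / p') := by
        rw [mul_one, e2]
        exact ENNReal.rpow_le_rpow (hi₁ r hr0 u) (by positivity)
      _ = ENNReal.ofReal (c₁' * r ^ (-(Q / q))) := by
        rw [ENNReal.ofReal_rpow_of_nonneg (by positivity) (by positivity),
          Real.mul_rpow hc₁ (by positivity), ← Real.rpow_mul hr0.le]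
        congr 3
        have : (Q - 0 - l * p') * (1 / p') = Q / p' - l := by
          field_simp
          ring
        rw [this, hbal]; ring
      _ ≤ _ := by
        apply ENNReal.ofReal_le_ofReal
        have e3 : r ^ (-(Q / q)) = (4 * (c₁' + 1))⁻¹ * t := by
          rw [hr, Real.mul_rpow (by positivity) (by positivity), ha₁, ← Real.rpow_mul (by positivity),
            ← Real.rpow_mul (by positivity)]
          rw [show q / Q * -(Q / q) = -1 by field_simp, show -(q / Q) * -(Q / q) = 1 by field_simp,
            Real.rpow_one, Real.rpow_neg_one]
        rw [e3, mul_inv, ← mul_assoc, ← mul_assoc]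
        have : c₁' * (c₁' + 1)⁻¹ ≤ 1 := by
          rw [← div_eq_mul_inv, div_le_one (by positivity)]; linarith
        nlinarith
  have hI2 : ∫⁻ v, ENNReal.ofReal (a * r ^ Q) * ENNReal.ofReal (Hdist u v ^ (-l) * (max r (Hdist u v)) ^ (-Q))
      ≤ ENNReal.ofReal (t / 4) := by
    rw [lintegral_const_mul' _ _ ENNReal.ofReal_ne_top]
    calc _ ≤ ENNReal.ofReal (a * r ^ Q) * ENNReal.ofReal (c₂ * r ^ (Q - l - Q)) := by
          gcongr; exact hi₂ r hr0 u
      _ = ENNReal.ofReal (c₂ * (a * r ^ (Q - l))) := by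
          rw [← ENNReal.ofReal_mul (by positivity)]
          congr 1
          have : r ^ (Q - l) = r ^ Q * r ^ (Q - l - Q) := by
            rw [← Real.rpow_add hr0]; congr 1; ring
          rw [this]; ring
      _ ≤ _ := by
        apply ENNReal.ofReal_le_ofReal
        have e3 : a * r ^ (Q - l) = (4 * (c₂ + 1))⁻¹ * t := by
          rw [hr, Real.mul_rpow (by positivity) (by positivity), ← Real.rpow_mul ht.le, ha, hb₁, mul_inv]
          have e4 : t ^ (q / p) * t ^ (-(q / Q) * (Q - l)) = t := by
            rw [← Real.rpow_add ht]
            have : q / p + -(q / Q) * (Q - l) = 1 := by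
              have : Q - l = Q / p - Q / q := by rw [hbal]; linarith
              rw [this]; field_simp; ring
            rw [this, Real.rpow_one]
          have e5 : (a₁ ^ (Q - l))⁻¹ * a₁ ^ (Q - l) = 1 := inv_mul_cancel₀ (by positivity)
          linear_combination (4 * (c₂ + 1))⁻¹ * (e5 * (t ^ (q / p) * t ^ (-(q / Q) * (Q - l))) + e4)
        rw [e3, mul_inv, ← mul_assoc, ← mul_assoc]
        have : c₂ * (c₂ + 1)⁻¹ ≤ 1 := by
          rw [← div_eq_mul_inv, div_le_one (by positivity)]; linarith
        nlinarith
  have htot : ENNReal.ofReal t ≤ ENNReal.ofReal (t / 4) + (ENNReal.ofReal (t / 4) + I3) := by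
    refine htI.trans ((lintegral_mono hpt).trans ?_)
    rw [lintegral_add_left (by fun_prop), lintegral_add_left (by fun_prop)]
    gcongr
  rw [← add_assoc, ← ENNReal.ofReal_add (by positivity) (by positivity),
    show t = t / 2 + t / 2 by ring, ENNReal.ofReal_add (by positivity) (by positivity)] at htot
  rw [show (t / 2 + t / 2) / 4 + (t / 2 + t / 2) / 4 = t / 2 by ring] at htot
  exact (ENNReal.add_le_add_iff_left ENNReal.ofReal_ne_top).1 htot

lemma HLS {n : ℕ} {Q p p' q l : ℝ} (hQ : Q = 2 * n + 2) (hpp : p.HolderConjugate p')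
    (hpq : p < q) (hbal : l = Q / p' + Q / q) :
    ∃ C : ℝ≥0∞, C ≠ ⊤ ∧ ∀ F : Hn n → ℝ≥0∞, Measurable F → ∫⁻ v, F v ^ p ≤ 1 →
      ∫⁻ u, (∫⁻ v, ENNReal.ofReal (Hdist u v ^ (-l)) * F v) ^ q ≤ C := by
  have hQ0 : 0 < Q := by rw [hQ]; positivity
  have hp0 : 0 < p := hpp.pos
  have hp1 : 1 < p := hpp.lt
  have hp'0 : 0 < p' := hpp.symm.pos
  have hq0 : 0 < q := hp0.trans hpq
  have hsum : 1 / p + 1 / p' = 1 := by have := hpp.inv_add_inv_eq_one; simpa using this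
  have hsumQ : Q / p + Q / p' = Q := by
    have : Q / p + Q / p' = Q * (1 / p + 1 / p') := by ring
    rw [this, hsum, mul_one]
  have hqp : Q / q < Q / p := by gcongr
  have hlQ : l < Q := by linarith
  have hl0 : 0 < l := by rw [hbal]; positivity
  obtain ⟨a₁, b₁, ha₁, hb₁, hstep⟩ := HLS_step (n := n) hQ hpp hpq hbal
  set w := Q / q * (q - 1) with hw
  have hw' : w = Q - Q / q := by rw [hw]; field_simp
  have hQp' : 0 < Q / p' := by positivity
  obtain ⟨c, hc, hint⟩ := lintegral_power_dist (n := n) (s := l) (w := w) hQ hlQ (by linarith)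
  set E : ℝ := 2 * a₁ ^ w with hE
  set D : ℝ := E * c * a₁ ^ (Q - l - w) * b₁ ^ (1 - p) with hD
  refine ⟨ENNReal.ofReal D, ENNReal.ofReal_ne_top, fun F hF hF1 => ?_⟩
  set H : Hn n → ℝ≥0∞ := fun u => ∫⁻ v, ENNReal.ofReal (Hdist u v ^ (-l)) * F v with hH
  set ρ : Hn n → ℝ := fun v => a₁ * ((F v).toReal / b₁) ^ (-(p / Q)) with hρ
  have hd2 : Measurable (fun x : Hn n × Hn n => Hdist x.1 x.2) := continuous_Hdist.measurable
  have hHm : Measurable H := by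
    refine Measurable.lintegral_prod_right' (f := fun x : Hn n × Hn n =>
      ENNReal.ofReal (Hdist x.1 x.2 ^ (-l)) * F x.2) ?_
    exact (hd2.pow_const _).ennreal_ofReal.mul (hF.comp measurable_snd)
  have hFfin : ∀ᵐ v, F v ≠ ⊤ := by
    have : ∀ᵐ v, F v ^ p < ⊤ := ae_lt_top (hF.pow_const p) (hF1.trans_lt (by simp)).ne
    filter_upwards [this] with v hv h
    rw [h, ENNReal.top_rpow_of_pos hp0] at hv
    exact lt_irrefl _ hv
  set Φ : Hn n → Hn n → ℝ≥0∞ := fun u v =>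
    ENNReal.ofReal E * (ENNReal.ofReal (Hdist u v ^ (-l) * (max (ρ v) (Hdist u v)) ^ (-w)) * F v) with hΦ
  have hΦm : Measurable (Function.uncurry Φ) := by
    have hρm : Measurable ρ := by fun_prop
    refine Measurable.const_mul (Measurable.mul (Measurable.ennreal_ofReal ?_) (hF.comp measurable_snd)) _
    exact (hd2.pow_const _).mul (((hρm.comp measurable_snd).max hd2).pow_const _)
  have hmain : ∀ N : ℕ, ∫⁻ u, (min (H u) N) ^ q ≤ ENNReal.ofReal D := by
    intro N
    calc ∫⁻ u, (min (H u) N) ^ q ≤ ∫⁻ u, ∫⁻ v, Φ u v := by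
          refine lintegral_mono fun u => ?_
          rcases eq_or_ne (min (H u) N) 0 with h0 | h0
          · simp only [h0, ENNReal.zero_rpow_of_pos hq0]; exact zero_le
          have hT : min (H u) (N : ℝ≥0∞) ≠ ⊤ := (min_le_right _ _).trans_lt (by simp) |>.ne
          set t := (min (H u) (N : ℝ≥0∞)).toReal with ht
          have ht0 : 0 < t := ENNReal.toReal_pos h0 hT
          have htt : ENNReal.ofReal t = min (H u) N := ENNReal.ofReal_toReal hT
          have hs := hstep F hF hF1 u t ht0 (by rw [htt]; exact min_le_left _ _)
          calc (min (H u) (N : ℝ≥0∞)) ^ q = ENNReal.ofReal (2 * t ^ (q - 1)) * ENNReal.ofReal (t / 2) := by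
                rw [← htt, ENNReal.ofReal_rpow_of_pos ht0, ← ENNReal.ofReal_mul (by positivity)]
                congr 1
                rw [Real.rpow_sub_one ht0.ne']; field_simp
            _ ≤ ENNReal.ofReal (2 * t ^ (q - 1)) * _ := by gcongr
            _ = ∫⁻ v, ENNReal.ofReal (2 * t ^ (q - 1)) * _ :=
                (lintegral_const_mul' _ _ ENNReal.ofReal_ne_top).symm
            _ ≤ ∫⁻ v, Φ u v := by
                refine lintegral_mono_ae ?_
                filter_upwards [hFfin] with v hv
                split_ifs with hif
                swap
                · rw [mul_zero]; exact zero_le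
                obtain ⟨h1, h2⟩ := hif
                have hd := Hdist_nonneg u v
                rw [hΦ]
                simp only []
                rw [← mul_assoc, ← mul_assoc, ← ENNReal.ofReal_mul (by positivity),
                  ← ENNReal.ofReal_mul (by positivity)]
                gcongr ENNReal.ofReal ?_ * _
                set f := (F v).toReal with hf
                have h3 : b₁ * t ^ (q / p) < f := by
                  rw [← ENNReal.ofReal_toReal hv] at h2
                  exact (ENNReal.ofReal_lt_ofReal_iff_of_nonneg (by positivity)).1 h2
                have hf0 : 0 < f := h3.trans' (by positivity)
                have hρ0 : 0 < ρ v := by simp only [hρ]; positivity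
                have h4 : ρ v ≤ a₁ * t ^ (-(q / Q)) := by
                  simp only [hρ]
                  gcongr
                  have h5 : t ^ (q / p) ≤ f / b₁ := by
                    rw [le_div_iff₀ hb₁]; linarith
                  have := Real.rpow_le_rpow_of_nonpos (by positivity) h5
                    (show -(p / Q) ≤ 0 by rw [neg_nonpos]; positivity)
                  refine this.trans (le_of_eq ?_)
                  rw [← Real.rpow_mul ht0.le]; congr 1; field_simp
                have h6 : max (ρ v) (Hdist u v) ≤ a₁ * t ^ (-(q / Q)) := max_le h4 h1.le
                have hmx : 0 < max (ρ v) (Hdist u v) := lt_max_of_lt_left hρ0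
                have hwnn : 0 ≤ w := by rw [hw]; have : 0 < q - 1 := by linarith
                                        positivity
                have h7 := Real.rpow_le_rpow_of_nonpos hmx h6 (show -w ≤ 0 by linarith)
                rw [Real.mul_rpow ha₁.le (by positivity), ← Real.rpow_mul ht0.le,
                  show -(q / Q) * -w = q - 1 by rw [hw]; field_simp] at h7
                have h8 : t ^ (q - 1) ≤ a₁ ^ w * max (ρ v) (Hdist u v) ^ (-w) := by
                  rw [Real.rpow_neg ha₁.le, inv_mul_le_iff₀ (by positivity)] at h7
                  exact h7
                calc 2 * t ^ (q - 1) * Hdist u v ^ (-l)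
                    ≤ 2 * (a₁ ^ w * max (ρ v) (Hdist u v) ^ (-w)) * Hdist u v ^ (-l) := by gcongr
                  _ = _ := by rw [hE]; ring
      _ = ∫⁻ v, ∫⁻ u, Φ u v := lintegral_lintegral_swap hΦm.aemeasurable
      _ ≤ ∫⁻ v, ENNReal.ofReal D * F v ^ p := by
          refine lintegral_mono_ae ?_
          filter_upwards [hFfin] with v hv
          rcases eq_or_ne (F v) 0 with h0 | h0
          · simp [hΦ, h0]
          set f := (F v).toReal with hf
          have hf0 : 0 < f := ENNReal.toReal_pos h0 hv
          have hff : F v = ENNReal.ofReal f := (ENNReal.ofReal_toReal hv).symm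
          have hρ0 : 0 < ρ v := by simp only [hρ]; positivity
          calc ∫⁻ u, Φ u v = ENNReal.ofReal E * ((∫⁻ u, ENNReal.ofReal (Hdist v u ^ (-l) * (max (ρ v) (Hdist v u)) ^ (-w))) * F v) := by
                simp only [hΦ]
                rw [lintegral_const_mul' _ _ ENNReal.ofReal_ne_top, lintegral_mul_const' _ _ hv]
                simp only [Hdist_comm]
            _ ≤ ENNReal.ofReal E * (ENNReal.ofReal (c * ρ v ^ (Q - l - w)) * F v) := by
                gcongr; exact hint _ hρ0 v
            _ = _ := by
                rw [hff, ENNReal.ofReal_rpow_of_pos hf0, ← ENNReal.ofReal_mul (by positivity),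
                  ← ENNReal.ofReal_mul (by positivity), ← ENNReal.ofReal_mul (by positivity)]
                congr 1
                have e1 : ρ v ^ (Q - l - w) = a₁ ^ (Q - l - w) * (f ^ (p - 1) * b₁ ^ (1 - p)) := by
                  simp only [hρ]
                  rw [Real.mul_rpow ha₁.le (by positivity), ← Real.rpow_mul (by positivity)]
                  have : -(p / Q) * (Q - l - w) = p - 1 := by
                    have e : Q - l - w = Q / p - Q := by linarith
                    rw [e]; field_simp; ring
                  rw [this, Real.div_rpow hf0.le hb₁.le, show 1 - p = -(p - 1) by ring,
                    Real.rpow_neg hb₁.le, div_eq_mul_inv]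
                rw [e1, Real.rpow_sub_one hf0.ne']
                field_simp
                rw [hD]
      _ = ENNReal.ofReal D * ∫⁻ v, F v ^ p := lintegral_const_mul' _ _ ENNReal.ofReal_ne_top
      _ ≤ ENNReal.ofReal D * 1 := by gcongr
      _ = _ := mul_one _
  have hsup : ∀ u, H u ^ q = ⨆ N : ℕ, (min (H u) N) ^ q := by
    intro u
    have h1 : Tendsto (fun N : ℕ => (min (H u) (N : ℝ≥0∞)) ^ q) atTop (nhds (H u ^ q)) := by
      refine (ENNReal.continuous_rpow_const.tendsto (H u)).comp ?_
      have := (tendsto_const_nhds (x := H u)).min ENNReal.tendsto_nat_nhds_top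
      simpa using this
    refine tendsto_nhds_unique h1 (tendsto_atTop_iSup ?_)
    intro i j hij
    simp only
    gcongr
  calc ∫⁻ u, H u ^ q = ∫⁻ u, ⨆ N : ℕ, (min (H u) N) ^ q := by simp_rw [hsup]
    _ = ⨆ N : ℕ, ∫⁻ u, (min (H u) N) ^ q := by
        refine lintegral_iSup (fun N => (hHm.min measurable_const).pow_const _) ?_
        intro i j hij u
        simp only
        gcongr
    _ ≤ _ := iSup_le hmain

/-- full kernel -/
def Kker {n : ℕ} (α β lam : ℝ) (u v : Hn n) : ℝ :=
  Hnorm u ^ (-α) * Hdist u v ^ (-lam) * Hnorm v ^ (-β)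

/-- full operator -/
def TT {n : ℕ} (α β lam : ℝ) (F : Hn n → ℝ≥0∞) (u : Hn n) : ℝ≥0∞ :=
  ∫⁻ v, ENNReal.ofReal (Kker α β lam u v) * F v

lemma Kker_nonneg {n : ℕ} (α β lam : ℝ) (u v : Hn n) : 0 ≤ Kker α β lam u v := by
  have := Hnorm_nonneg u
  have := Hnorm_nonneg v
  have := Hdist_nonneg u v
  unfold Kker; positivity

lemma measurable_Kker {n : ℕ} (α β lam : ℝ) :
    Measurable (Function.uncurry (Kker α β lam : Hn n → Hn n → ℝ)) := by
  have h : Measurable (Hnorm : Hn n → ℝ) := continuous_Hnorm.measurable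
  have hd2 : Measurable (fun x : Hn n × Hn n => Hdist x.1 x.2) := continuous_Hdist.measurable
  exact (((h.comp measurable_fst).pow_const _).mul (hd2.pow_const _)).mul
    ((h.comp measurable_snd).pow_const _)

lemma measurable_TT {n : ℕ} (α β lam : ℝ) {F : Hn n → ℝ≥0∞} (hF : Measurable F) :
    Measurable (TT α β lam F) := by
  refine Measurable.lintegral_prod_right' (f := fun x : Hn n × Hn n =>
      ENNReal.ofReal (Kker α β lam x.1 x.2) * F x.2) ?_
  exact (measurable_Kker α β lam).ennreal_ofReal.mul (hF.comp measurable_snd)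

lemma Kker_le_Mker {n : ℕ} {α β lam : ℝ} (hlam : 0 < lam) (u v : Hn n) (hu : 0 < Hnorm u)
    (hv : 0 < Hnorm v) (h : max (Hnorm u) (Hnorm v) / 4 ≤ Hdist u v) :
    Kker α β lam u v ≤ 4 ^ lam * Mker α β lam u v := by
  have hm : 0 < max (Hnorm u) (Hnorm v) := lt_max_of_lt_left hu
  have h1 := Real.rpow_le_rpow_of_nonpos (by positivity) h (show -lam ≤ 0 by linarith)
  rw [Real.div_rpow hm.le (by norm_num), Real.rpow_neg (by norm_num : (0:ℝ) ≤ 4), div_inv_eq_mul] at h1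
  unfold Kker Mker
  calc Hnorm u ^ (-α) * Hdist u v ^ (-lam) * Hnorm v ^ (-β)
      ≤ Hnorm u ^ (-α) * (max (Hnorm u) (Hnorm v) ^ (-lam) * 4 ^ lam) * Hnorm v ^ (-β) := by gcongr
    _ = _ := by ring

lemma Kker_le {n : ℕ} {α β lam : ℝ} (hlam : 0 < lam) (hab : 0 ≤ α + β) (u v : Hn n) (hu : 0 < Hnorm u)
    (hv : 0 < Hnorm v) :
    Kker α β lam u v ≤ (4 ^ lam + 4 ^ |-α| * 4 ^ |-β|) *
      (Mker α β lam u v + Hdist u v ^ (-(lam + α + β))) := by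
  have hd := Hdist_nonneg u v
  have hM := Mker_nonneg α β lam u v
  have hD : 0 ≤ Hdist u v ^ (-(lam + α + β)) := by positivity
  have h4 : (0:ℝ) ≤ 4 ^ lam := by positivity
  have h5 : (0:ℝ) ≤ 4 ^ |-α| * 4 ^ |-β| := by positivity
  rcases le_or_gt (max (Hnorm u) (Hnorm v) / 4) (Hdist u v) with h | h
  · refine (Kker_le_Mker hlam u v hu hv h).trans ?_
    nlinarith [mul_nonneg h4 hD, mul_nonneg h5 hM, mul_nonneg h5 hD]
  · have key : Kker α β lam u v ≤ 4 ^ |-α| * 4 ^ |-β| * Hdist u v ^ (-(lam + α + β)) := by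
      rcases hd.eq_or_lt with h0 | h0
      · unfold Kker
        rw [← h0, Real.zero_rpow (by linarith)]
        simp only [mul_zero, zero_mul]
        positivity
      · set m := max (Hnorm u) (Hnorm v) with hm
        have hm0 : 0 < m := lt_max_of_lt_left hu
        have t1 := Hnorm_le_left u v
        have t2 := Hnorm_le_right u v
        have m1 : Hnorm u ≤ m := le_max_left _ _
        have m2 : Hnorm v ≤ m := le_max_right _ _
        have m3 : m ≤ 4 * Hnorm u := by
          rcases max_choice (Hnorm u) (Hnorm v) with e | e <;> rw [← hm] at e <;> linarith
        have m4 : m ≤ 4 * Hnorm v := by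
          rcases max_choice (Hnorm u) (Hnorm v) with e | e <;> rw [← hm] at e <;> linarith
        have r1 := rpow_comp_le (-α) (by norm_num : (1:ℝ) ≤ 4) hm0 hu (by linarith) m3
        have r2 := rpow_comp_le (-β) (by norm_num : (1:ℝ) ≤ 4) hm0 hv (by linarith) m4
        have r3 : m ^ (-α) * m ^ (-β) ≤ Hdist u v ^ (-(α + β)) := by
          rw [← Real.rpow_add hm0, show -α + -β = -(α + β) by ring]
          exact Real.rpow_le_rpow_of_nonpos h0 (by linarith) (by linarith)
        unfold Kker
        calc Hnorm u ^ (-α) * Hdist u v ^ (-lam) * Hnorm v ^ (-β)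
            ≤ (4 ^ |-α| * m ^ (-α)) * Hdist u v ^ (-lam) * (4 ^ |-β| * m ^ (-β)) := by gcongr
          _ = 4 ^ |-α| * 4 ^ |-β| * Hdist u v ^ (-lam) * (m ^ (-α) * m ^ (-β)) := by ring
          _ ≤ 4 ^ |-α| * 4 ^ |-β| * Hdist u v ^ (-lam) * Hdist u v ^ (-(α + β)) := by gcongr
          _ = _ := by
            rw [mul_assoc, ← Real.rpow_add h0]; congr 2; ring
    refine key.trans ?_
    nlinarith [mul_nonneg h4 hD, mul_nonneg h5 hM, mul_nonneg h4 hM]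

lemma SW_bound {n : ℕ} {Q p p' q α β lam : ℝ} (hQ : Q = 2 * n + 2) (hpp : p.HolderConjugate p')
    (hpq : p < q) (hlam : 0 < lam) (hab : 0 ≤ α + β)
    (hA : α < Q / q) (hB : β < Q / p') (hbal : α + β + lam = Q / p' + Q / q) :
    ∃ C : ℝ≥0∞, C ≠ ⊤ ∧ ∀ F : Hn n → ℝ≥0∞, Measurable F → ∫⁻ v, F v ^ p ≤ 1 →
      ∫⁻ u, (TT α β lam F u) ^ q ≤ C := by
  have hp1 : 1 < p := hpp.lt
  have hq1 : 1 ≤ q := by linarith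
  obtain ⟨C₁, hC₁, h₁⟩ := M_bound (n := n) hQ hpp hpq hA hB hbal
  obtain ⟨C₂, hC₂, h₂⟩ := HLS (n := n) (l := lam + α + β) hQ hpp hpq (by linarith)
  set D : ℝ := 4 ^ lam + 4 ^ |-α| * 4 ^ |-β| with hD
  refine ⟨ENNReal.ofReal D ^ q * (2 ^ (q - 1) * (C₁ + C₂)), ?_, fun F hF hF1 => ?_⟩
  · have : (2:ℝ≥0∞) ^ (q - 1) ≠ ⊤ := ENNReal.rpow_ne_top_of_nonneg (by linarith) (by simp)
    have : ENNReal.ofReal D ^ q ≠ ⊤ := ENNReal.rpow_ne_top_of_nonneg (by linarith) (by simp)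
    finiteness
  · have hmM : Measurable fun u => ∫⁻ v, ENNReal.ofReal (Mker α β lam u v) * F v :=
      Measurable.lintegral_prod_right' (f := fun x : Hn n × Hn n =>
        ENNReal.ofReal (Mker α β lam x.1 x.2) * F x.2)
        ((measurable_Mker α β lam).ennreal_ofReal.mul (hF.comp measurable_snd))
    calc ∫⁻ u, (TT α β lam F u) ^ q
        ≤ ∫⁻ u, ENNReal.ofReal D ^ q * (2 ^ (q - 1) * ((∫⁻ v, ENNReal.ofReal (Mker α β lam u v) * F v) ^ q +
          (∫⁻ v, ENNReal.ofReal (Hdist u v ^ (-(lam + α + β))) * F v) ^ q)) := by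
          refine lintegral_mono_ae ?_
          filter_upwards [ae_Hnorm_pos n] with u hu
          refine le_trans ?_ (mul_le_mul_right (ENNReal.rpow_add_le_mul_rpow_add_rpow _ _ hq1) _)
          rw [← ENNReal.mul_rpow_of_nonneg _ _ (by linarith)]
          refine ENNReal.rpow_le_rpow ?_ (by linarith)
          rw [← lintegral_add_left, ← lintegral_const_mul' _ _ ENNReal.ofReal_ne_top]
          · unfold TT
            refine lintegral_mono_ae ?_
            filter_upwards [ae_Hnorm_pos n] with v hv
            have hd := Hdist_nonneg u v
            rw [← add_mul, ← mul_assoc, ← ENNReal.ofReal_add (Mker_nonneg _ _ _ _ _) (by positivity),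
              ← ENNReal.ofReal_mul (by positivity)]
            gcongr
            exact Kker_le hlam hab u v hu hv
          · exact ((measurable_Mker α β lam).comp measurable_prodMk_left).ennreal_ofReal.mul hF
      _ = ENNReal.ofReal D ^ q * (2 ^ (q - 1) * ((∫⁻ u, (∫⁻ v, ENNReal.ofReal (Mker α β lam u v) * F v) ^ q) +
          ∫⁻ u, (∫⁻ v, ENNReal.ofReal (Hdist u v ^ (-(lam + α + β))) * F v) ^ q)) := by
          rw [lintegral_const_mul', lintegral_const_mul', lintegral_add_left (hmM.pow_const _)]
          · exact ENNReal.rpow_ne_top_of_nonneg (by linarith) (by simp)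
          · exact ENNReal.rpow_ne_top_of_nonneg (by linarith) (by simp)
      _ ≤ _ := by
          gcongr
          · exact h₁ F hF hF1
          · exact h₂ F hF hF1

lemma decouple {n : ℕ} {q α β lam η θ : ℝ} (hq : 0 < q) (hlam : 0 < lam) {C : ℝ≥0∞} {F : Hn n → ℝ≥0∞}
    (hC : ∫⁻ u, (∫⁻ v, ENNReal.ofReal (Mker (α - η) (β + η) lam u v) * F v) ^ q ≤ C)
    {U : Set (Hn n)} (hU : MeasurableSet U)
    (h : ∀ u ∈ U, ∀ v, F v ≠ 0 → 0 < Hnorm u → 0 < Hnorm v →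
      max (Hnorm u) (Hnorm v) / 4 ≤ Hdist u v ∧ (Hnorm v / Hnorm u) ^ η ≤ θ) :
    ∫⁻ u in U, (TT α β lam F u) ^ q ≤ ENNReal.ofReal (4 ^ lam * θ) ^ q * C := by
  calc ∫⁻ u in U, (TT α β lam F u) ^ q
      ≤ ∫⁻ u in U, ENNReal.ofReal (4 ^ lam * θ) ^ q * (∫⁻ v, ENNReal.ofReal (Mker (α - η) (β + η) lam u v) * F v) ^ q := by
        refine lintegral_mono_ae ?_
        filter_upwards [ae_restrict_mem hU, ae_restrict_of_ae (ae_Hnorm_pos n)] with u huU hu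
        rw [← ENNReal.mul_rpow_of_nonneg _ _ hq.le]
        refine ENNReal.rpow_le_rpow ?_ hq.le
        rw [← lintegral_const_mul' _ _ ENNReal.ofReal_ne_top]
        refine lintegral_mono_ae ?_
        filter_upwards [ae_Hnorm_pos n] with v hv
        rcases eq_or_ne (F v) 0 with h0 | h0
        · simp [h0]
        obtain ⟨h1, h2⟩ := h u huU v h0 hu hv
        have hθ : 0 ≤ θ := le_trans (by positivity) h2
        rw [← mul_assoc, ← ENNReal.ofReal_mul (by positivity)]
        gcongr
        refine (Kker_le_Mker hlam u v hu hv h1).trans ?_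
        rw [mul_assoc]
        gcongr
        have e : Mker α β lam u v = (Hnorm v / Hnorm u) ^ η * Mker (α - η) (β + η) lam u v := by
          unfold Mker
          rw [Real.div_rpow hv.le hu.le, show -(α - η) = -α + η by ring, show -(β + η) = -β - η by ring,
            Real.rpow_add hu, Real.rpow_sub hv]
          have := Real.rpow_pos_of_pos hv η
          have := Real.rpow_pos_of_pos hu η
          field_simp
        rw [e]
        have := Mker_nonneg (α - η) (β + η) lam u v
        gcongr
    _ ≤ ENNReal.ofReal (4 ^ lam * θ) ^ q * ∫⁻ u, (∫⁻ v, ENNReal.ofReal (Mker (α - η) (β + η) lam u v) * F v) ^ q := by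
        rw [lintegral_const_mul' _ _ (ENNReal.rpow_ne_top_of_nonneg hq.le ENNReal.ofReal_ne_top)]
        gcongr
        exact Measure.restrict_le_self
    _ ≤ _ := by gcongr

/-- Uniform decoupling: smallness of the two interaction terms. -/
lemma decouple_small {n : ℕ} {Q p p' q α β lam : ℝ} (hQ : Q = 2 * n + 2) (hpp : p.HolderConjugate p')
    (hpq : p < q) (hlam : 0 < lam)
    (hA : α < Q / q) (hB : β < Q / p') (hbal : α + β + lam = Q / p' + Q / q) (e : ℝ≥0∞) (he : e ≠ 0) :
    ∃ L : ℝ, 1 < L ∧ ∀ F : Hn n → ℝ≥0∞, Measurable F → ∫⁻ v, F v ^ p ≤ 1 → ∀ S : ℝ,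
      ((∀ v, F v ≠ 0 → L * Hnorm v ≤ S) → (∫⁻ u in {u | S ≤ Hnorm u}, (TT α β lam F u) ^ q) ^ (1 / q) ≤ e) ∧
      ((∀ v, F v ≠ 0 → L * S ≤ Hnorm v) → (∫⁻ u in {u | Hnorm u < S}, (TT α β lam F u) ^ q) ^ (1 / q) ≤ e) := by
  have hq0 : 0 < q := hpp.pos.trans hpq
  have hm : Measurable (Hnorm : Hn n → ℝ) := continuous_Hnorm.measurable
  obtain ⟨η, hη, h1, h2⟩ : ∃ η : ℝ, 0 < η ∧ α + η < Q / q ∧ β + η < Q / p' := by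
    refine ⟨min (Q / q - α) (Q / p' - β) / 2, ?_, ?_, ?_⟩
    · have : 0 < min (Q / q - α) (Q / p' - β) := lt_min (by linarith) (by linarith)
      linarith
    · have := min_le_left (Q / q - α) (Q / p' - β); linarith
    · have := min_le_right (Q / q - α) (Q / p' - β); linarith
  obtain ⟨C₁, hC₁, hb₁⟩ := M_bound (n := n) (A := α - η) (B := β + η) (lam := lam) hQ hpp hpq (by linarith) h2 (by linarith)
  obtain ⟨C₂, hC₂, hb₂⟩ := M_bound (n := n) (A := α - -η) (B := β + -η) (lam := lam) hQ hpp hpq (by linarith) (by linarith) (by linarith)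
  have hlim : Tendsto (fun L : ℝ => ENNReal.ofReal (4 ^ lam * L ^ (-η)) * (C₁ + C₂) ^ (1 / q)) atTop (nhds 0) := by
    have : Tendsto (fun L : ℝ => ENNReal.ofReal (4 ^ lam * L ^ (-η))) atTop (nhds 0) := by
      have := (tendsto_rpow_neg_atTop hη).const_mul ((4:ℝ) ^ lam)
      rw [mul_zero] at this
      simpa using ENNReal.tendsto_ofReal this
    have h3 : (C₁ + C₂) ^ (1 / q) ≠ ⊤ := ENNReal.rpow_ne_top_of_nonneg (by positivity) (by finiteness)
    simpa using ENNReal.Tendsto.mul_const this (Or.inr h3)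
  obtain ⟨L, hL, hL8⟩ := ((hlim.eventually_le_const (pos_iff_ne_zero.2 he)).and (eventually_ge_atTop 8)).exists
  have hL0 : 0 < L := by linarith
  have hfin : ∀ C ≤ C₁ + C₂, ∀ I : ℝ≥0∞, I ≤ ENNReal.ofReal (4 ^ lam * L ^ (-η)) ^ q * C → I ^ (1 / q) ≤ e := by
    intro C hC I hI
    refine le_trans ?_ hL
    calc I ^ (1 / q) ≤ (ENNReal.ofReal (4 ^ lam * L ^ (-η)) ^ q * (C₁ + C₂)) ^ (1 / q) := by
          gcongr
          refine hI.trans ?_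
          gcongr
      _ = _ := by
          rw [ENNReal.mul_rpow_of_nonneg _ _ (by positivity), ← ENNReal.rpow_mul, mul_one_div_cancel hq0.ne',
            ENNReal.rpow_one]
  refine ⟨L, by linarith, fun F hF hF1 S => ⟨fun hs => ?_, fun hs => ?_⟩⟩
  · refine hfin C₁ le_self_add _ (decouple hq0 hlam (hb₁ F hF hF1) (measurableSet_le measurable_const hm) ?_)
    intro u hu v h0 hup hvp
    have hu : S ≤ Hnorm u := hu
    have hv := hs v h0
    have hvu : L * Hnorm v ≤ Hnorm u := hv.trans hu
    have h8 : 8 * Hnorm v ≤ Hnorm u := le_trans (by gcongr) hvu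
    have := Hnorm_le_left u v
    constructor
    · rw [max_eq_left (by linarith)]; linarith
    · rw [Real.rpow_neg hL0.le, ← Real.inv_rpow hL0.le]
      refine Real.rpow_le_rpow (by positivity) ?_ hη.le
      rw [div_le_iff₀ hup, ← div_eq_inv_mul, le_div_iff₀ hL0]
      linarith
  · refine hfin C₂ le_add_self _ (decouple hq0 hlam (hb₂ F hF hF1) (measurableSet_lt hm measurable_const) ?_)
    intro u hu v h0 hup hvp
    have hu : Hnorm u < S := hu
    have hv := hs v h0
    have hvu : L * Hnorm u ≤ Hnorm v := le_trans (by gcongr) hv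
    have h8 : 8 * Hnorm u ≤ Hnorm v := le_trans (by gcongr) hvu
    have := Hnorm_le_right u v
    constructor
    · rw [max_eq_right (by linarith)]; linarith
    · refine Real.rpow_le_rpow_of_nonpos hL0 ?_ (by linarith)
      rwa [le_div_iff₀ hup]

lemma eLpNorm_eq_of_nonneg {n : ℕ} {p : ℝ} (hp : 0 < p) (h : Hn n → ℝ) (h0 : ∀ v, 0 ≤ h v) :
    eLpNorm h (ENNReal.ofReal p) volume = (∫⁻ v, ENNReal.ofReal (h v) ^ p) ^ (1 / p) := by
  rw [eLpNorm_eq_lintegral_rpow_enorm_toReal (by simpa using hp) ENNReal.ofReal_ne_top, ENNReal.toReal_ofReal hp.le]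
  simp only [Real.enorm_eq_ofReal (h0 _)]

lemma Ilam_nonneg {n : ℕ} (lam : ℝ) (g : Hn n → ℝ) (hg : ∀ v, 0 ≤ g v) (u : Hn n) : 0 ≤ Ilam lam g u :=
  integral_nonneg fun v => div_nonneg (hg v) (Real.rpow_nonneg (Hdist_nonneg _ _) _)

lemma Ilam_eq {n : ℕ} (lam : ℝ) (g : Hn n → ℝ) (hgm : Measurable g) (hg : ∀ v, 0 ≤ g v) (u : Hn n) :
    Ilam lam g u = (∫⁻ v, ENNReal.ofReal (g v / Hdist u v ^ lam)).toReal := by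
  have hd := measurable_Hdist_right u
  unfold Ilam
  rw [integral_eq_lintegral_of_nonneg_ae]
  · exact Eventually.of_forall fun v => div_nonneg (hg v) (Real.rpow_nonneg (Hdist_nonneg _ _) _)
  · exact (hgm.div (hd.pow_const _)).aestronglyMeasurable

lemma TT_eq {n : ℕ} (α β lam : ℝ) (g : Hn n → ℝ) (hg : ∀ v, 0 ≤ g v) (u : Hn n) :
    TT α β lam (fun v => ENNReal.ofReal (g v * Hnorm v ^ β)) u
      = ENNReal.ofReal (Hnorm u ^ (-α)) * ∫⁻ v, ENNReal.ofReal (g v / Hdist u v ^ lam) := by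
  have hu := Hnorm_nonneg u
  rw [← lintegral_const_mul' _ _ ENNReal.ofReal_ne_top]
  unfold TT
  refine lintegral_congr_ae ?_
  filter_upwards [ae_Hnorm_pos n] with v hv
  rw [← ENNReal.ofReal_mul (Kker_nonneg _ _ _ _ _), ← ENNReal.ofReal_mul (by positivity)]
  congr 1
  unfold Kker
  have : Hnorm v ^ (-β) * Hnorm v ^ β = 1 := by rw [← Real.rpow_add hv]; simp
  rw [Real.rpow_neg (Hdist_nonneg u v), div_eq_mul_inv]
  linear_combination (Hnorm u ^ (-α) * (Hdist u v ^ lam)⁻¹ * g v) * this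

lemma Ilam_le_TT {n : ℕ} (α β lam : ℝ) (g : Hn n → ℝ) (hgm : Measurable g) (hg : ∀ v, 0 ≤ g v) (u : Hn n) :
    ENNReal.ofReal (Ilam lam g u * Hnorm u ^ (-α)) ≤
      TT α β lam (fun v => ENNReal.ofReal (g v * Hnorm v ^ β)) u := by
  rw [TT_eq α β lam g hg, ENNReal.ofReal_mul (Ilam_nonneg lam g hg u), Ilam_eq lam g hgm hg, mul_comm]
  gcongr
  exact ENNReal.ofReal_toReal_le

lemma Ilam_eq_TT {n : ℕ} (α β lam : ℝ) (g : Hn n → ℝ) (hgm : Measurable g) (hg : ∀ v, 0 ≤ g v) (u : Hn n)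
    (hu : 0 < Hnorm u) (hT : TT α β lam (fun v => ENNReal.ofReal (g v * Hnorm v ^ β)) u ≠ ⊤) :
    ENNReal.ofReal (Ilam lam g u * Hnorm u ^ (-α)) =
      TT α β lam (fun v => ENNReal.ofReal (g v * Hnorm v ^ β)) u := by
  rw [TT_eq α β lam g hg] at hT ⊢
  have : ∫⁻ v, ENNReal.ofReal (g v / Hdist u v ^ lam) ≠ ⊤ := by
    intro h
    rw [h, ENNReal.mul_top] at hT
    · exact hT rfl
    · exact (ENNReal.ofReal_pos.2 (by positivity)).ne'
  rw [ENNReal.ofReal_mul (Ilam_nonneg lam g hg u), Ilam_eq lam g hgm hg, mul_comm, ENNReal.ofReal_toReal this]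

lemma eLpNorm_le_TT {n : ℕ} {q : ℝ} (hq : 0 < q) (α β lam : ℝ) (g : Hn n → ℝ) (hgm : Measurable g)
    (hg : ∀ v, 0 ≤ g v) :
    eLpNorm (fun u => Ilam lam g u * Hnorm u ^ (-α)) (ENNReal.ofReal q) volume ≤
      (∫⁻ u, TT α β lam (fun v => ENNReal.ofReal (g v * Hnorm v ^ β)) u ^ q) ^ (1 / q) := by
  rw [eLpNorm_eq_of_nonneg hq _ fun u => mul_nonneg (Ilam_nonneg lam g hg u) (Real.rpow_nonneg (Hnorm_nonneg u) _)]
  gcongr with u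
  exact Ilam_le_TT α β lam g hgm hg u

lemma norm_one_iff {n : ℕ} {p : ℝ} (hp : 0 < p) (β : ℝ) (g : Hn n → ℝ) (hg : ∀ v, 0 ≤ g v) :
    eLpNorm (fun v => g v * Hnorm v ^ β) (ENNReal.ofReal p) volume = 1 ↔
      ∫⁻ v, ENNReal.ofReal (g v * Hnorm v ^ β) ^ p = 1 := by
  rw [eLpNorm_eq_of_nonneg hp _ fun u => mul_nonneg (hg u) (Real.rpow_nonneg (Hnorm_nonneg u) _)]
  constructor
  · intro h
    have := congrArg (fun x => x ^ p) h
    simpa [← ENNReal.rpow_mul, inv_mul_cancel₀ hp.ne'] using this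
  · intro h; rw [h, ENNReal.one_rpow]

lemma Cst_ne_top {n : ℕ} {p q α β lam : ℝ} (hp : 0 < p) (hq : 0 < q) {C : ℝ≥0∞} (hC : C ≠ ⊤)
    (hSW : ∀ F : Hn n → ℝ≥0∞, Measurable F → ∫⁻ v, F v ^ p ≤ 1 → ∫⁻ u, (TT α β lam F u) ^ q ≤ C) :
    SWbestConst n p q lam α β ≠ ⊤ := by
  refine ne_top_of_le_ne_top (b := C ^ (1 / q)) (ENNReal.rpow_ne_top_of_nonneg (by positivity) hC) ?_
  refine sSup_le ?_
  rintro c ⟨g, hgm, hg, h1, rfl⟩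
  refine (eLpNorm_le_TT hq α β lam g hgm hg).trans ?_
  have hm : Measurable (Hnorm : Hn n → ℝ) := continuous_Hnorm.measurable
  gcongr
  exact hSW _ (by fun_prop) ((norm_one_iff hp β g hg).1 h1).le

lemma TT_const_mul {n : ℕ} (α β lam : ℝ) (F : Hn n → ℝ≥0∞) (k : ℝ) (u : Hn n) :
    TT α β lam (fun v => ENNReal.ofReal k * F v) u = ENNReal.ofReal k * TT α β lam F u := by
  unfold TT
  rw [← lintegral_const_mul' _ _ ENNReal.ofReal_ne_top]
  exact lintegral_congr fun v => by ring

lemma TT_congr {n : ℕ} (α β lam : ℝ) {F G : Hn n → ℝ≥0∞} (h : F =ᵐ[volume] G) (u : Hn n) :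
    TT α β lam F u = TT α β lam G u := by
  unfold TT
  refine lintegral_congr_ae ?_
  filter_upwards [h] with v hv
  rw [hv]

lemma TT_le_Cst {n : ℕ} {p q α β lam : ℝ} (hp : 0 < p) (hq : 0 < q) {C : ℝ≥0∞} (hC : C ≠ ⊤)
    (hSW : ∀ F : Hn n → ℝ≥0∞, Measurable F → ∫⁻ v, F v ^ p ≤ 1 → ∫⁻ u, (TT α β lam F u) ^ q ≤ C)
    (F : Hn n → ℝ≥0∞) (hF : Measurable F) (hFt : ∀ v, F v ≠ ⊤) (hF1 : ∫⁻ v, F v ^ p ≤ 1) :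
    (∫⁻ u, TT α β lam F u ^ q) ^ (1 / q) ≤ SWbestConst n p q lam α β * (∫⁻ v, F v ^ p) ^ (1 / p) := by
  have hm : Measurable (Hnorm : Hn n → ℝ) := continuous_Hnorm.measurable
  set m := ∫⁻ v, F v ^ p with hmdef
  rcases eq_or_ne m 0 with h0 | h0
  · have hF0 : F =ᵐ[volume] 0 := by
      rw [hmdef, lintegral_eq_zero_iff (hF.pow_const p)] at h0
      filter_upwards [h0] with v hv
      have hv : F v ^ p = 0 := hv
      simpa [hp, hp.not_gt] using hv
    have : ∀ u, TT α β lam F u = 0 := by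
      intro u
      rw [TT_congr α β lam hF0]; simp [TT]
    simp [this, hq]
  have hmt : m ≠ ⊤ := (hF1.trans_lt (by simp)).ne
  set k : ℝ := (m ^ (-(1 / p))).toReal with hk
  have hkt : m ^ (-(1 / p)) ≠ ⊤ := ENNReal.rpow_ne_top_of_ne_zero h0 hmt
  have hkk : ENNReal.ofReal k = m ^ (-(1 / p)) := ENNReal.ofReal_toReal hkt
  have hk0 : 0 ≤ k := ENNReal.toReal_nonneg
  set g : Hn n → ℝ := fun v => k * (F v).toReal * Hnorm v ^ (-β) with hg
  have hgm : Measurable g := by fun_prop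
  have hg0 : ∀ v, 0 ≤ g v := fun v => by
    have := Hnorm_nonneg v
    positivity
  have hFg : (fun v => ENNReal.ofReal (g v * Hnorm v ^ β)) =ᵐ[volume] fun v => ENNReal.ofReal k * F v := by
    filter_upwards [ae_Hnorm_pos n] with v hv
    have : Hnorm v ^ (-β) * Hnorm v ^ β = 1 := by rw [← Real.rpow_add hv]; simp
    simp only [hg]
    rw [mul_assoc, this, mul_one, ENNReal.ofReal_mul hk0, ENNReal.ofReal_toReal (hFt v)]
  have hg1 : ∫⁻ v, ENNReal.ofReal (g v * Hnorm v ^ β) ^ p = 1 := by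
    calc _ = ∫⁻ v, ENNReal.ofReal k ^ p * F v ^ p := by
          refine lintegral_congr_ae ?_
          filter_upwards [hFg] with v hv
          rw [hv, ENNReal.mul_rpow_of_nonneg _ _ hp.le]
      _ = ENNReal.ofReal k ^ p * m := by
          rw [lintegral_const_mul _ (hF.pow_const p)]
      _ = 1 := by
          rw [hkk, ← ENNReal.rpow_mul, neg_mul, one_div_mul_cancel hp.ne', ENNReal.rpow_neg_one,
            ENNReal.inv_mul_cancel h0 hmt]
  have hTT : ∀ u, TT α β lam (fun v => ENNReal.ofReal (g v * Hnorm v ^ β)) u = ENNReal.ofReal k * TT α β lam F u := by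
    intro u
    rw [TT_congr α β lam hFg, TT_const_mul]
  have hle : eLpNorm (fun u => Ilam lam g u * Hnorm u ^ (-α)) (ENNReal.ofReal q) volume ≤ SWbestConst n p q lam α β :=
    le_sSup ⟨g, hgm, hg0, (norm_one_iff hp β g hg0).2 hg1, rfl⟩
  have hfin : ∀ᵐ u, TT α β lam (fun v => ENNReal.ofReal (g v * Hnorm v ^ β)) u ≠ ⊤ := by
    have hFm : Measurable fun v => ENNReal.ofReal (g v * Hnorm v ^ β) := by fun_prop
    have := ae_lt_top ((measurable_TT α β lam hFm).pow_const q)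
      ((hSW _ hFm hg1.le).trans_lt (lt_top_iff_ne_top.2 hC)).ne
    filter_upwards [this] with u hu h
    rw [h, ENNReal.top_rpow_of_pos hq] at hu
    exact lt_irrefl _ hu
  have heq : eLpNorm (fun u => Ilam lam g u * Hnorm u ^ (-α)) (ENNReal.ofReal q) volume
      = ENNReal.ofReal k * (∫⁻ u, TT α β lam F u ^ q) ^ (1 / q) := by
    rw [eLpNorm_eq_of_nonneg hq _ fun u => mul_nonneg (Ilam_nonneg lam g hg0 u) (Real.rpow_nonneg (Hnorm_nonneg u) _)]
    have : ∫⁻ u, ENNReal.ofReal (Ilam lam g u * Hnorm u ^ (-α)) ^ q = ENNReal.ofReal k ^ q * ∫⁻ u, TT α β lam F u ^ q := by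
      rw [← lintegral_const_mul _ ((measurable_TT α β lam hF).pow_const q)]
      refine lintegral_congr_ae ?_
      filter_upwards [hfin, ae_Hnorm_pos n] with u hu hup
      rw [Ilam_eq_TT α β lam g hgm hg0 u hup hu, hTT, ENNReal.mul_rpow_of_nonneg _ _ hq.le]
    rw [this, ENNReal.mul_rpow_of_nonneg _ _ (by positivity), ← ENNReal.rpow_mul, mul_one_div_cancel hq.ne',
      ENNReal.rpow_one]
  rw [heq] at hle
  have h1 : m ^ (1 / p) * ENNReal.ofReal k = 1 := by
    rw [hkk, ← ENNReal.rpow_add _ _ h0 hmt]; simp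
  calc (∫⁻ u, TT α β lam F u ^ q) ^ (1 / q)
      = m ^ (1 / p) * (ENNReal.ofReal k * (∫⁻ u, TT α β lam F u ^ q) ^ (1 / q)) := by
        rw [← mul_assoc, h1, one_mul]
    _ ≤ m ^ (1 / p) * SWbestConst n p q lam α β := by gcongr
    _ = _ := mul_comm _ _

lemma TT_norm_ne_zero {n : ℕ} {p q α β lam : ℝ} (hp : 0 < p) (hq : 0 < q)
    (F : Hn n → ℝ≥0∞) (hF : Measurable F) (hF1 : ∫⁻ v, F v ^ p = 1) :
    (∫⁻ u, TT α β lam F u ^ q) ^ (1 / q) ≠ 0 := by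
  intro h
  have h1 : ∫⁻ u, TT α β lam F u ^ q = 0 := by
    rcases ENNReal.rpow_eq_zero_iff.1 h with h | h
    · exact h.1
    · have : 0 < 1 / q := by positivity
      linarith [h.2]
  rw [lintegral_eq_zero_iff ((measurable_TT α β lam hF).pow_const q)] at h1
  have hne : (ae (volume : Measure (Hn n))).NeBot := by
    refine ae_neBot.2 fun h0 => ?_
    simp [h0] at hF1
  obtain ⟨u, hu, hup⟩ := (h1.and (ae_Hnorm_pos n)).exists
  have hu : TT α β lam F u ^ q = 0 := hu
  have hu : TT α β lam F u = 0 := by simpa [hq, hq.not_gt] using hu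
  unfold TT at hu
  have hmK : Measurable (fun v => ENNReal.ofReal (Kker α β lam u v) * F v) :=
    ((measurable_Kker α β lam).comp measurable_prodMk_left).ennreal_ofReal.mul hF
  replace hu := (lintegral_eq_zero_iff hmK).1 hu
  have hF0 : F =ᵐ[volume] 0 := by
    filter_upwards [hu, ae_Hnorm_pos n, ae_Hdist_pos u] with v hv hvp hd
    have hK : 0 < Kker α β lam u v := by unfold Kker; positivity
    have hv : ENNReal.ofReal (Kker α β lam u v) * F v = 0 := hv
    rcases mul_eq_zero.1 hv with h | h
    · exact absurd h (ENNReal.ofReal_pos.2 hK).ne'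
    · exact h
  have : ∫⁻ v, F v ^ p = 0 := by
    rw [lintegral_eq_zero_iff (hF.pow_const p)]
    filter_upwards [hF0] with v hv
    simp [hv, hp]
  rw [this] at hF1
  exact zero_ne_one hF1

lemma mink4 {X : Type*} [MeasurableSpace X] {μ : Measure X} {q : ℝ} (hq : 1 ≤ q) {f₁ f₂ f₃ : X → ℝ≥0∞}
    (h₁ : Measurable f₁) (h₂ : Measurable f₂) (h₃ : Measurable f₃) {U : Set X} (hU : MeasurableSet U) :
    (∫⁻ x, (f₁ x + f₂ x + f₃ x) ^ q ∂μ) ^ (1 / q) ≤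
      (∫⁻ x in Uᶜ, f₁ x ^ q ∂μ + ∫⁻ x in U, f₂ x ^ q ∂μ) ^ (1 / q) + (∫⁻ x in U, f₁ x ^ q ∂μ) ^ (1 / q)
      + (∫⁻ x in Uᶜ, f₂ x ^ q ∂μ) ^ (1 / q) + (∫⁻ x, f₃ x ^ q ∂μ) ^ (1 / q) := by
  have hq0 : 0 < q := by linarith
  have hind : ∀ (V : Set X) (hV : MeasurableSet V) (f : X → ℝ≥0∞),
      ∫⁻ x, (V.indicator f x) ^ q ∂μ = ∫⁻ x in V, f x ^ q ∂μ := by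
    intro V hV f
    rw [← lintegral_indicator hV]
    refine lintegral_congr fun x => ?_
    by_cases hx : x ∈ V <;> simp [hx, hq0]
  set A : X → ℝ≥0∞ := Uᶜ.indicator f₁ + U.indicator f₂ with hA
  have hAm : Measurable A := (h₁.indicator hU.compl).add (h₂.indicator hU)
  have hB := h₁.indicator hU
  have hC := h₂.indicator hU.compl
  have hsum : (fun x => (f₁ x + f₂ x + f₃ x) ^ q) =
      fun x => (((A + U.indicator f₁) + Uᶜ.indicator f₂) + f₃) x ^ q := by
    funext x
    by_cases hx : x ∈ U
    · simp [hA, hx, add_comm]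
    · simp [hA, hx]
  have hAi : ∫⁻ x, A x ^ q ∂μ = ∫⁻ x in Uᶜ, f₁ x ^ q ∂μ + ∫⁻ x in U, f₂ x ^ q ∂μ := by
    rw [← lintegral_add_compl (fun x => A x ^ q) hU, add_comm]
    congr 1
    · refine setLIntegral_congr_fun hU.compl fun x hx => ?_
      have hx' : x ∉ U := hx
      simp [hA, hx']
    · refine setLIntegral_congr_fun hU fun x hx => ?_
      simp [hA, hx]
  rw [hsum]
  refine (ENNReal.lintegral_Lp_add_le ((hAm.add hB).add hC).aemeasurable h₃.aemeasurable hq).trans ?_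
  gcongr
  refine (ENNReal.lintegral_Lp_add_le (hAm.add hB).aemeasurable hC.aemeasurable hq).trans ?_
  rw [hind _ hU.compl]
  gcongr
  refine (ENNReal.lintegral_Lp_add_le hAm.aemeasurable hB.aemeasurable hq).trans ?_
  rw [hind _ hU, hAi]

lemma TT_add {n : ℕ} (α β lam : ℝ) {F G : Hn n → ℝ≥0∞} (hF : Measurable F) (u : Hn n) :
    TT α β lam (F + G) u = TT α β lam F u + TT α β lam G u := by
  unfold TT
  have hmK : Measurable (fun v => ENNReal.ofReal (Kker α β lam u v) * F v) :=
    ((measurable_Kker α β lam).comp measurable_prodMk_left).ennreal_ofReal.mul hF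
  rw [← lintegral_add_left hmK]
  simp [mul_add]

lemma pow_conc {a b d : ℝ≥0∞} {r : ℝ} (hr : 1 < r) (ha : a ≤ d) (hb : b ≤ d) (hab : a + b ≤ 1) :
    a ^ r + b ^ r ≤ d ^ (r - 1) := by
  have key : ∀ x ≤ d, x ^ r ≤ x * d ^ (r - 1) := by
    intro x hx
    have : x ^ r = x * x ^ (r - 1) := by
      conv_rhs => enter [1]; rw [← ENNReal.rpow_one x]
      rw [← ENNReal.rpow_add_of_nonneg _ _ (by norm_num) (by linarith)]; ring_nf
    rw [this]
    gcongr
  calc a ^ r + b ^ r ≤ a * d ^ (r - 1) + b * d ^ (r - 1) := add_le_add (key _ ha) (key _ hb)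
    _ = (a + b) * d ^ (r - 1) := by ring
    _ ≤ 1 * d ^ (r - 1) := by gcongr
    _ = _ := one_mul _

lemma split_bound {n : ℕ} {p q α β lam : ℝ} (hp : 0 < p) (hq : 1 ≤ q) {K e : ℝ≥0∞}
    (hK : ∀ F : Hn n → ℝ≥0∞, Measurable F → (∀ v, F v ≠ ⊤) → ∫⁻ v, F v ^ p ≤ 1 →
      (∫⁻ u, TT α β lam F u ^ q) ^ (1 / q) ≤ K * (∫⁻ v, F v ^ p) ^ (1 / p))
    {F₁ F₂ F₃ : Hn n → ℝ≥0∞} (h₁ : Measurable F₁) (h₂ : Measurable F₂) (h₃ : Measurable F₃)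
    (t₁ : ∀ v, F₁ v ≠ ⊤) (t₂ : ∀ v, F₂ v ≠ ⊤) (t₃ : ∀ v, F₃ v ≠ ⊤)
    (o₁ : ∫⁻ v, F₁ v ^ p ≤ 1) (o₂ : ∫⁻ v, F₂ v ^ p ≤ 1) (o₃ : ∫⁻ v, F₃ v ^ p ≤ 1)
    {U : Set (Hn n)} (hU : MeasurableSet U)
    (e₁ : (∫⁻ u in U, TT α β lam F₁ u ^ q) ^ (1 / q) ≤ e)
    (e₂ : (∫⁻ u in Uᶜ, TT α β lam F₂ u ^ q) ^ (1 / q) ≤ e)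
    (e₃ : ∫⁻ v, F₃ v ^ p ≤ e ^ p) {d : ℝ≥0∞} (hpq : p < q)
    (d₁ : ∫⁻ v, F₁ v ^ p ≤ d) (d₂ : ∫⁻ v, F₂ v ^ p ≤ d) (d₃ : (∫⁻ v, F₁ v ^ p) + ∫⁻ v, F₂ v ^ p ≤ 1) :
    (∫⁻ u, TT α β lam (F₁ + F₂ + F₃) u ^ q) ^ (1 / q) ≤ K * (d ^ (q / p - 1)) ^ (1 / q) + e + e + K * e := by
  have hq0 : 0 < q := by linarith
  have hr : 1 < q / p := by rwa [lt_div_iff₀ hp, one_mul]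
  have : ∀ u, TT α β lam (F₁ + F₂ + F₃) u = TT α β lam F₁ u + TT α β lam F₂ u + TT α β lam F₃ u := by
    intro u
    rw [TT_add _ _ _ (h₁.add h₂), TT_add _ _ _ h₁]
  simp_rw [this]
  refine (mink4 hq (measurable_TT α β lam h₁) (measurable_TT α β lam h₂) (measurable_TT α β lam h₃) hU).trans ?_
  have hpow : ∀ F : Hn n → ℝ≥0∞, Measurable F → (∀ v, F v ≠ ⊤) → ∫⁻ v, F v ^ p ≤ 1 →
      ∫⁻ u, TT α β lam F u ^ q ≤ K ^ q * (∫⁻ v, F v ^ p) ^ (q / p) := by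
    intro F a b c
    have h := ENNReal.rpow_le_rpow (hK F a b c) hq0.le
    rw [← ENNReal.rpow_mul, one_div_mul_cancel hq0.ne', ENNReal.rpow_one,
      ENNReal.mul_rpow_of_nonneg _ _ hq0.le, ← ENNReal.rpow_mul] at h
    rwa [show q / p = 1 / p * q by ring]
  have m3 : (∫⁻ u, TT α β lam F₃ u ^ q) ^ (1 / q) ≤ K * e := by
    refine (hK _ h₃ t₃ o₃).trans ?_
    gcongr
    have := ENNReal.rpow_le_rpow e₃ (by positivity : 0 ≤ 1 / p)
    rwa [← ENNReal.rpow_mul e, mul_one_div_cancel hp.ne', ENNReal.rpow_one] at this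
  refine add_le_add (add_le_add (add_le_add ?_ e₁) e₂) m3
  calc _ ≤ (K ^ q * (∫⁻ v, F₁ v ^ p) ^ (q / p) + K ^ q * (∫⁻ v, F₂ v ^ p) ^ (q / p)) ^ (1 / q) := by
        gcongr
        · exact (setLIntegral_le_lintegral _ _).trans (hpow _ h₁ t₁ o₁)
        · exact (setLIntegral_le_lintegral _ _).trans (hpow _ h₂ t₂ o₂)
    _ ≤ (K ^ q * d ^ (q / p - 1)) ^ (1 / q) := by
        rw [← mul_add]
        gcongr
        exact pow_conc hr d₁ d₂ d₃
    _ = _ := by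
        rw [ENNReal.mul_rpow_of_nonneg _ _ (by positivity), ← ENNReal.rpow_mul, mul_one_div_cancel hq0.ne',
          ENNReal.rpow_one]

lemma pigeon {X : Type*} [MeasurableSpace X] {μ : Measure X} {f : X → ℝ≥0∞} {N : ℕ} (hN : 0 < N)
    {A : ℕ → Set X} (hA : ∀ k, MeasurableSet (A k)) (hd : Pairwise (Function.onFun Disjoint A))
    (hf : ∫⁻ x, f x ∂μ ≤ 1) : ∃ k < N, ∫⁻ x in A k, f x ∂μ ≤ (N : ℝ≥0∞)⁻¹ := by
  by_contra! h
  have h1 : ∑ k ∈ Finset.range N, (N : ℝ≥0∞)⁻¹ < ∑ k ∈ Finset.range N, ∫⁻ x in A k, f x ∂μ := by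
    apply ENNReal.sum_lt_sum_of_nonempty
    · simpa using hN.ne'
    · intro i hi; exact h i (Finset.mem_range.1 hi)
  rw [← lintegral_biUnion_finset (fun i _ j _ hij => hd hij) (fun k _ => hA k)] at h1
  have h2 : (1 : ℝ≥0∞) < 1 := by
    calc (1 : ℝ≥0∞) = ∑ k ∈ Finset.range N, (N : ℝ≥0∞)⁻¹ := by
          simp only [Finset.sum_const, Finset.card_range, nsmul_eq_mul]
          rw [ENNReal.mul_inv_cancel (by exact_mod_cast hN.ne') (by simp)]
      _ < _ := h1
      _ ≤ _ := setLIntegral_le_lintegral _ _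
      _ ≤ 1 := hf
  exact lt_irrefl _ h2

lemma exists_small {K θ : ℝ≥0∞} (hK0 : K ≠ 0) (hKt : K ≠ ⊤) (hθ : θ < 1) :
    ∃ e : ℝ≥0∞, e ≠ 0 ∧ K * θ + e + e + K * e < K := by
  have hlt : K * θ < K := by
    calc K * θ < K * 1 := ENNReal.mul_lt_mul_right hK0 hKt hθ
      _ = K := mul_one _
  have ht : Tendsto (fun k : ℕ => K * θ + (k : ℝ≥0∞)⁻¹ + (k : ℝ≥0∞)⁻¹ + K * (k : ℝ≥0∞)⁻¹) atTop
      (nhds (K * θ + 0 + 0 + K * 0)) := by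
    have h0 := ENNReal.tendsto_inv_nat_nhds_zero
    exact ((tendsto_const_nhds.add h0).add h0).add (ENNReal.Tendsto.const_mul h0 (Or.inr hKt))
  simp only [add_zero, mul_zero] at ht
  obtain ⟨k, hk⟩ := (ht.eventually_lt_const hlt).exists
  exact ⟨_, by simp, hk⟩

lemma one_region {n : ℕ} {p q α β lam : ℝ} (hp : 0 < p) (hq : 1 ≤ q) (hpq : p < q) {K e δ : ℝ≥0∞}
    (hδ : δ ≤ 1 / 2) {L : ℝ} (hL : 1 < L)
    (hK : ∀ F : Hn n → ℝ≥0∞, Measurable F → (∀ v, F v ≠ ⊤) → ∫⁻ v, F v ^ p ≤ 1 →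
      (∫⁻ u, TT α β lam F u ^ q) ^ (1 / q) ≤ K * (∫⁻ v, F v ^ p) ^ (1 / p))
    (hdec : ∀ F : Hn n → ℝ≥0∞, Measurable F → ∫⁻ v, F v ^ p ≤ 1 → ∀ S : ℝ,
      ((∀ v, F v ≠ 0 → L * Hnorm v ≤ S) → (∫⁻ u in {u | S ≤ Hnorm u}, (TT α β lam F u) ^ q) ^ (1 / q) ≤ e) ∧
      ((∀ v, F v ≠ 0 → L * S ≤ Hnorm v) → (∫⁻ u in {u | Hnorm u < S}, (TT α β lam F u) ^ q) ^ (1 / q) ≤ e))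
    {N : ℕ} (hN : 0 < N) (hNe : (N : ℝ≥0∞)⁻¹ ≤ e ^ p)
    (F : Hn n → ℝ≥0∞) (hF : Measurable F) (hFt : ∀ v, F v ≠ ⊤) (hF1 : ∫⁻ v, F v ^ p = 1)
    (hhalf : ∫⁻ v in {v | Hnorm v < 1}, F v ^ p = 1 / 2)
    (hbig : K * ((1 - δ) ^ (q / p - 1)) ^ (1 / q) + e + e + K * e < (∫⁻ u, TT α β lam F u ^ q) ^ (1 / q)) :
    ∫⁻ v in {v | L ^ (2 * N) ≤ Hnorm v}, F v ^ p ≤ δ := by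
  have hm : Measurable (Hnorm : Hn n → ℝ) := continuous_Hnorm.measurable
  have hind : ∀ (V : Set (Hn n)) (hV : MeasurableSet V),
      ∫⁻ x, (V.indicator F x) ^ p = ∫⁻ x in V, F x ^ p := by
    intro V hV
    rw [← lintegral_indicator hV]
    refine lintegral_congr fun x => ?_
    by_cases hx : x ∈ V <;> simp [hx, hp]
  obtain ⟨k, hkN, hk⟩ := pigeon (f := fun v => F v ^ p) (μ := volume) hN
    (A := fun k => {v : Hn n | L ^ (2 * k) ≤ Hnorm v ∧ Hnorm v < L ^ (2 * k + 2)})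
    (fun k => (measurableSet_le measurable_const hm).inter (measurableSet_lt hm measurable_const))
    (by
      have aux : ∀ i j : ℕ, i < j → Disjoint {v : Hn n | L ^ (2 * i) ≤ Hnorm v ∧ Hnorm v < L ^ (2 * i + 2)}
          {v : Hn n | L ^ (2 * j) ≤ Hnorm v ∧ Hnorm v < L ^ (2 * j + 2)} := by
        intro i j hij
        refine Set.disjoint_left.2 fun v hi hj => ?_
        have h1 : L ^ (2 * i + 2) ≤ L ^ (2 * j) := pow_le_pow_right₀ hL.le (by omega)
        exact absurd (hi.2.trans_le (h1.trans hj.1)) (lt_irrefl _)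
      intro i j hij
      rcases lt_or_gt_of_ne hij with h | h
      · exact aux i j h
      · exact (aux j i h).symm) hF1.le
  set R₁ := L ^ (2 * k) with hR1
  set R₂ := L ^ (2 * k + 2) with hR2
  set S := L ^ (2 * k + 1) with hS
  have hL0 : 0 < L := by linarith
  have hR1one : 1 ≤ R₁ := one_le_pow₀ hL.le
  have hLR : L * R₁ = S := by rw [hR1, hS, pow_succ]; ring
  have hLS : L * S = R₂ := by rw [hR2, hS, pow_succ, pow_succ]; ring
  have hRR : R₁ ≤ R₂ := pow_le_pow_right₀ hL.le (by omega)
  have mV1 : MeasurableSet {v : Hn n | Hnorm v < R₁} := measurableSet_lt hm measurable_const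
  have mV2 : MeasurableSet {v : Hn n | R₂ ≤ Hnorm v} := measurableSet_le measurable_const hm
  have mV3 : MeasurableSet {v : Hn n | R₁ ≤ Hnorm v ∧ Hnorm v < R₂} :=
    (measurableSet_le measurable_const hm).inter (measurableSet_lt hm measurable_const)
  have mU : MeasurableSet {u : Hn n | S ≤ Hnorm u} := measurableSet_le measurable_const hm
  have hle : ∀ V : Set (Hn n), ∫⁻ v in V, F v ^ p ≤ 1 := fun V => (setLIntegral_le_lintegral _ _).trans hF1.le
  have hti : ∀ (V : Set (Hn n)) v, V.indicator F v ≠ ⊤ := by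
    intro V v
    by_cases hx : v ∈ V <;> simp [hx, hFt]
  have hab : (∫⁻ v in {v : Hn n | Hnorm v < R₁}, F v ^ p) + ∫⁻ v in {v : Hn n | R₂ ≤ Hnorm v}, F v ^ p ≤ 1 := by
    have hdis : Disjoint {v : Hn n | Hnorm v < R₁} {v : Hn n | R₂ ≤ Hnorm v} := by
      refine Set.disjoint_left.2 fun v h1 h2 => ?_
      have h1 : Hnorm v < R₁ := h1
      have h2 : R₂ ≤ Hnorm v := h2
      linarith
    rw [← lintegral_union mV2 hdis]
    exact hle _
  have ha : 1 / 2 ≤ ∫⁻ v in {v : Hn n | Hnorm v < R₁}, F v ^ p := by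
    rw [← hhalf]
    exact lintegral_mono_set fun v (hv : Hnorm v < 1) => (lt_of_lt_of_le hv hR1one : Hnorm v < R₁)
  have hsub : ∫⁻ v in {v : Hn n | L ^ (2 * N) ≤ Hnorm v}, F v ^ p ≤ ∫⁻ v in {v : Hn n | R₂ ≤ Hnorm v}, F v ^ p := by
    refine lintegral_mono_set fun v (hv : L ^ (2 * N) ≤ Hnorm v) => ?_
    exact ((pow_le_pow_right₀ hL.le (by omega) : R₂ ≤ L ^ (2 * N)).trans hv : R₂ ≤ Hnorm v)
  refine hsub.trans ?_
  by_contra! hb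
  refine absurd hbig (not_lt.2 ?_)
  have hFsum : F = {v : Hn n | Hnorm v < R₁}.indicator F + {v : Hn n | R₂ ≤ Hnorm v}.indicator F +
      {v : Hn n | R₁ ≤ Hnorm v ∧ Hnorm v < R₂}.indicator F := by
    funext v
    simp only [Pi.add_apply, Set.indicator_apply, Set.mem_ofPred_eq]
    by_cases h1 : Hnorm v < R₁
    · have h2 : ¬ R₂ ≤ Hnorm v := by linarith
      have h3 : ¬ R₁ ≤ Hnorm v := by linarith
      simp [h1, h2, h3]
    · by_cases h2 : R₂ ≤ Hnorm v
      · have h3 : ¬ Hnorm v < R₂ := by linarith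
        simp [h1, h2, h3]
      · have h3 : Hnorm v < R₂ := by linarith
        have h4 : R₁ ≤ Hnorm v := by linarith
        simp [h1, h2, h3, h4]
  have hUc : {u : Hn n | S ≤ Hnorm u}ᶜ = {u | Hnorm u < S} := by ext u; simp
  have hδt : δ ≠ ⊤ := ne_top_of_le_ne_top (by simp) hδ
  have h12 : (1 : ℝ≥0∞) / 2 ≤ 1 - δ := by
    refine ENNReal.le_sub_of_add_le_right hδt ?_
    calc (1 : ℝ≥0∞) / 2 + δ ≤ 1 / 2 + 1 / 2 := by gcongr
      _ = 1 := ENNReal.add_halves 1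
  rw [hFsum]
  refine split_bound hp hq hK (hF.indicator mV1) (hF.indicator mV2) (hF.indicator mV3) (hti _) (hti _) (hti _)
    (by rw [hind _ mV1]; exact hle _) (by rw [hind _ mV2]; exact hle _) (by rw [hind _ mV3]; exact hle _)
    mU ?_ ?_ ?_ hpq ?_ ?_ ?_
  · refine (hdec _ (hF.indicator mV1) (by rw [hind _ mV1]; exact hle _) S).1 fun v hv => ?_
    have hv := Set.mem_of_indicator_ne_zero hv
    have : Hnorm v < R₁ := hv
    rw [← hLR]; gcongr
  · rw [hUc]
    refine (hdec _ (hF.indicator mV2) (by rw [hind _ mV2]; exact hle _) S).2 fun v hv => ?_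
    have hv := Set.mem_of_indicator_ne_zero hv
    have : R₂ ≤ Hnorm v := hv
    rwa [hLS]
  · rw [hind _ mV3]; exact hk.trans hNe
  · rw [hind _ mV1]
    refine ENNReal.le_sub_of_add_le_right hδt (le_trans ?_ hab)
    gcongr
  · rw [hind _ mV2]
    refine le_trans ?_ h12
    have h5 : (1 : ℝ≥0∞) / 2 + ∫⁻ v in {v : Hn n | R₂ ≤ Hnorm v}, F v ^ p ≤ 1 / 2 + 1 / 2 := by
      rw [ENNReal.add_halves]
      refine le_trans ?_ hab
      gcongr
    exact (ENNReal.add_le_add_iff_left (by simp)).1 h5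
  · rw [hind _ mV1, hind _ mV2]; exact hab

lemma muWD_apply {n : ℕ} {p β : ℝ} (g : Hn n → ℝ) (hg : ∀ v, 0 ≤ g v)
    (A : Set (Hn n)) (hA : MeasurableSet A) (hp : 0 ≤ p) :
    muWD p β g A = ∫⁻ v in A, ENNReal.ofReal (g v * Hnorm v ^ β) ^ p := by
  unfold muWD
  rw [withDensity_apply _ hA]
  congr 1
  funext v
  have h1 := Hnorm_nonneg v
  rw [abs_of_nonneg (hg v), ENNReal.ofReal_rpow_of_nonneg (mul_nonneg (hg v) (Real.rpow_nonneg h1 _)) hp,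
    Real.mul_rpow (hg v) (Real.rpow_nonneg h1 _), ← Real.rpow_mul h1]

lemma Hball_zero {n : ℕ} (R : ℝ) : Hball (0 : Hn n) R = {v | Hnorm v < R} := by
  unfold Hball
  simp only [Hdist_zero]

/-- uniform tightness around the origin -/
lemma tight_all {n : ℕ} (μs : ℕ → Measure (Hn n)) (h1 : ∀ i, μs i Set.univ = 1)
    (ht : ∀ δ : ℝ≥0∞, δ ≠ 0 → δ ≤ 1 / 2 → ∃ R : ℝ, ∀ᶠ i in atTop, μs i {v | R ≤ Hnorm v} ≤ δ)
    (ε : ℝ) (hε : 0 < ε) : ∃ R : ℝ, 0 < R ∧ ∀ i, 1 - ENNReal.ofReal ε ≤ μs i (Hball 0 R) := by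
  have hm : Measurable (Hnorm : Hn n → ℝ) := continuous_Hnorm.measurable
  have hδ0 : min (ENNReal.ofReal ε) (1 / 2) ≠ 0 := by
    have : 0 < min (ENNReal.ofReal ε) (1 / 2) := lt_min (ENNReal.ofReal_pos.2 hε) (by simp)
    exact this.ne'
  obtain ⟨R₀, hR₀⟩ := ht _ hδ0 (min_le_right _ _)
  obtain ⟨N, hN⟩ := eventually_atTop.1 hR₀
  have hmono : ∀ i (a b : ℝ), a ≤ b → μs i {v | b ≤ Hnorm v} ≤ μs i {v | a ≤ Hnorm v} := by
    intro i a b hab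
    refine measure_mono fun v hv => ?_
    have hv : b ≤ Hnorm v := hv
    exact (hab.trans hv : a ≤ Hnorm v)
  have hev : ∀ i, ∀ᶠ k : ℕ in atTop, μs i {v | (k : ℝ) ≤ Hnorm v} ≤ ENNReal.ofReal ε := by
    intro i
    have h := tendsto_measure_iInter_atTop (μ := μs i) (s := fun k : ℕ => {v : Hn n | (k : ℝ) ≤ Hnorm v})
      (fun k => (measurableSet_le measurable_const hm).nullMeasurableSet)
      (by
        intro a b hab v hv
        have hv : (b : ℝ) ≤ Hnorm v := hv
        exact (le_trans (by exact_mod_cast hab) hv : (a : ℝ) ≤ Hnorm v))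
      ⟨0, ((measure_mono (Set.subset_univ _)).trans_lt (by rw [h1]; simp)).ne⟩
    have he : (⋂ k : ℕ, {v : Hn n | (k : ℝ) ≤ Hnorm v}) = ∅ := by
      refine Set.eq_empty_iff_forall_notMem.2 fun v hv => ?_
      obtain ⟨k, hk⟩ := exists_nat_gt (Hnorm v)
      have : (k : ℝ) ≤ Hnorm v := Set.mem_iInter.1 hv k
      linarith
    rw [he, measure_empty] at h
    exact h.eventually_le_const (ENNReal.ofReal_pos.2 hε)
  have hall : ∀ᶠ k : ℕ in atTop, ∀ i ∈ Finset.range N, μs i {v | (k : ℝ) ≤ Hnorm v} ≤ ENNReal.ofReal ε :=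
    (eventually_all_finset (Finset.range N)).2 fun i _ => hev i
  obtain ⟨k, hk⟩ := hall.exists
  refine ⟨max 1 (max R₀ k), lt_of_lt_of_le one_pos (le_max_left _ _), fun i => ?_⟩
  have hb : μs i {v | max 1 (max R₀ k) ≤ Hnorm v} ≤ ENNReal.ofReal ε := by
    by_cases hi : i < N
    · exact (hmono i k _ ((le_max_right _ _).trans (le_max_right _ _))).trans (hk i (Finset.mem_range.2 hi))
    · exact ((hmono i R₀ _ ((le_max_left _ _).trans (le_max_right _ _))).trans (hN i (not_lt.1 hi))).trans
        (min_le_left _ _)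
  rw [tsub_le_iff_right, ← h1 i]
  calc μs i Set.univ ≤ μs i (Hball 0 (max 1 (max R₀ k)) ∪ {v | max 1 (max R₀ k) ≤ Hnorm v}) := by
        refine measure_mono fun v _ => ?_
        rw [Hball_zero]
        rcases lt_or_ge (Hnorm v) (max 1 (max R₀ k)) with h | h
        · exact Or.inl h
        · exact Or.inr h
    _ ≤ _ := measure_union_le _ _
    _ ≤ _ := by gcongr

lemma norm_le_Hnorm {n : ℕ} (v : Hn n) : ‖v‖ ≤ max (Hnorm v) (Hnorm v ^ 2) := by
  rw [Prod.norm_def]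
  refine max_le_max ?_ (abs_snd_le_Hnorm v)
  refine le_trans ?_ (znorm_le_Hnorm v)
  rw [znorm_eq]
  rw [pi_norm_le_iff_of_nonneg (norm_nonneg _)]
  intro j
  exact PiLp.norm_apply_le (WithLp.toLp 2 v.1) j

def cutf {n : ℕ} (k : ℕ) (x : Hn n) : ℝ := max 0 (min 1 ((k : ℝ) + 1 - ‖x‖))

lemma cutf_cont {n : ℕ} (k : ℕ) : Continuous (cutf k : Hn n → ℝ) := by
  unfold cutf; fun_prop

lemma cutf_nonneg {n : ℕ} (k : ℕ) (x : Hn n) : 0 ≤ cutf k x := le_max_left _ _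

lemma cutf_le_one {n : ℕ} (k : ℕ) (x : Hn n) : cutf k x ≤ 1 := max_le zero_le_one (min_le_left _ _)

lemma cutf_one {n : ℕ} (k : ℕ) (x : Hn n) (h : ‖x‖ ≤ k) : cutf k x = 1 := by
  unfold cutf
  rw [min_eq_left (by linarith)]; simp

lemma cutf_mono {n : ℕ} (x : Hn n) : Monotone fun k => cutf k x := by
  intro a b hab
  have : (a : ℝ) ≤ b := by exact_mod_cast hab
  unfold cutf
  simp only
  gcongr

lemma cutf_supp {n : ℕ} (k : ℕ) : HasCompactSupport (cutf k : Hn n → ℝ) := by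
  refine HasCompactSupport.intro (isCompact_closedBall (0 : Hn n) (k + 1)) fun x hx => ?_
  have hx : ¬ ‖x‖ ≤ k + 1 := by simpa using hx
  unfold cutf
  rw [max_eq_left]
  exact (min_le_right _ _).trans (by linarith)

lemma weak_mass {n : ℕ} (μs : ℕ → Measure (Hn n)) (h1 : ∀ i, μs i Set.univ = 1)
    (ht : ∀ ε : ℝ, 0 < ε → ∃ R : ℝ, 0 < R ∧ ∀ i, 1 - ENNReal.ofReal ε ≤ μs i (Hball 0 R))
    (μ : Measure (Hn n))
    (hw : ∀ f : Hn n → ℝ, Continuous f → HasCompactSupport f →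
        Tendsto (fun i => ∫ u, f u ∂ (μs i)) atTop (nhds (∫ u, f u ∂ μ))) : μ Set.univ = 1 := by
  have hm : Measurable (Hnorm : Hn n → ℝ) := continuous_Hnorm.measurable
  have hprob : ∀ i, IsProbabilityMeasure (μs i) := fun i => ⟨h1 i⟩
  have hint : ∀ i k, Integrable (cutf k : Hn n → ℝ) (μs i) := fun i k => by
    have := hprob i
    exact (cutf_cont k).integrable_of_hasCompactSupport (cutf_supp k)
  have hle : ∀ k, ∫ u, cutf k u ∂μ ≤ 1 := by
    intro k
    refine le_of_tendsto' (hw _ (cutf_cont k) (cutf_supp k)) fun i => ?_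
    have := hprob i
    calc ∫ u, cutf k u ∂(μs i) ≤ ∫ u, (1 : ℝ) ∂(μs i) :=
          integral_mono (hint i k) (integrable_const _) (cutf_le_one k)
      _ = 1 := by simp
  have hge : ∀ ε : ℝ, 0 < ε → ∃ k₀ : ℕ, ∀ k ≥ k₀, 1 - ε ≤ ∫ u, cutf k u ∂μ := by
    intro ε hε
    obtain ⟨R, hR, hb⟩ := ht ε hε
    obtain ⟨k₀, hk₀⟩ := exists_nat_ge (max R (R ^ 2))
    refine ⟨k₀, fun k hk => ?_⟩
    refine ge_of_tendsto' (hw _ (cutf_cont k) (cutf_supp k)) fun i => ?_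
    have := hprob i
    have hBm : MeasurableSet (Hball (0 : Hn n) R) := by
      rw [Hball_zero]; exact measurableSet_lt hm measurable_const
    have h2 : 1 - ε ≤ (μs i).real (Hball 0 R) := by
      have h3 := hb i
      have h4 := ENNReal.toReal_mono (measure_ne_top _ _) h3
      rw [Measure.real]
      refine le_trans ?_ h4
      have := ENNReal.le_toReal_sub (a := 1) (b := ENNReal.ofReal ε) (by simp)
      rwa [ENNReal.toReal_ofReal hε.le, ENNReal.toReal_one] at this
    refine h2.trans ?_
    rw [← integral_indicator_one hBm]
    refine integral_mono ((integrable_const (1 : ℝ)).indicator hBm) (hint i k) fun v => ?_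
    by_cases hv : v ∈ Hball (0 : Hn n) R
    · rw [Hball_zero] at hv
      have hv' : Hnorm v < R := hv
      have h5 : ‖v‖ ≤ k := by
        refine (norm_le_Hnorm v).trans ((max_le_max hv'.le ?_).trans (hk₀.trans (by exact_mod_cast hk)))
        exact pow_le_pow_left₀ (Hnorm_nonneg v) hv'.le 2
      rw [cutf_one k v h5]
      exact Set.indicator_le_self' (by simp) v
    · simp [hv, cutf_nonneg]
  obtain ⟨k₁, hk₁⟩ := hge (1 / 2) (by norm_num)
  have hlin : ∀ k ≥ k₁, ∫⁻ u, ENNReal.ofReal (cutf k u) ∂μ = ENNReal.ofReal (∫ u, cutf k u ∂μ) := by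
    intro k hk
    have hi : Integrable (cutf k : Hn n → ℝ) μ := by
      by_contra h
      have := hk₁ k hk
      rw [integral_undef h] at this
      norm_num at this
    rw [ofReal_integral_eq_lintegral_ofReal hi (ae_of_all _ (cutf_nonneg k))]
  have hsup : Tendsto (fun k => ∫⁻ u, ENNReal.ofReal (cutf k u) ∂μ) atTop (nhds (∫⁻ u, 1 ∂μ)) := by
    refine lintegral_tendsto_of_tendsto_of_monotone (fun k => ((cutf_cont k).measurable.ennreal_ofReal).aemeasurable)
      (ae_of_all _ fun x a b hab => ENNReal.ofReal_le_ofReal (cutf_mono x hab)) (ae_of_all _ fun x => ?_)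
    refine tendsto_const_nhds.congr' ?_
    obtain ⟨k, hk⟩ := exists_nat_ge ‖x‖
    filter_upwards [eventually_ge_atTop k] with j hj
    rw [cutf_one j x (hk.trans (by exact_mod_cast hj))]; simp
  rw [lintegral_one] at hsup
  refine tendsto_nhds_unique hsup ?_
  have hreal : Tendsto (fun k => ∫ u, cutf k u ∂μ) atTop (nhds 1) := by
    rw [Metric.tendsto_atTop]
    intro ε hε
    obtain ⟨k, hk⟩ := hge (ε / 2) (by linarith)
    refine ⟨k, fun j hj => ?_⟩
    rw [Real.dist_eq, abs_lt]
    constructor <;> linarith [hk j hj, hle j]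
  have := ENNReal.tendsto_ofReal hreal
  rw [ENNReal.ofReal_one] at this
  refine this.congr' ?_
  filter_upwards [eventually_ge_atTop k₁] with k hk
  rw [hlin k hk]

/-- **Compactness for a normalized maximizing sequence of the full-weight Stein–Weiss
inequality** (Lemma 2.2): the compactness alternative holds for `μ_i = |g_i|^p|v|^{βp} dv`,
and any weak-* limit `μ` of a subsequence has total mass `1`. -/
theorem maximizing_sequence_compactness
    (n : ℕ) (hn : 1 ≤ n) (Q p p' q q' lam α β : ℝ) (hQ : Q = 2 * n + 2)
    (hp : 1 < p) (hq' : 1 < q')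
    (hq : 1 / q + 1 / q' = 1) (hp' : 1 / p + 1 / p' = 1)
    (hlam0 : 0 < lam) (hlamQ : lam < Q)
    (hab : 0 ≤ α + β) (habQ : lam + α + β ≤ Q)
    (hβ : β < Q / p') (hα : α < Q / q)
    (hbal : 1 / p + 1 / q' + (lam + α + β) / Q = 2)
    (hpq : p < q)
    (g : ℕ → Hn n → ℝ)
    (hmeas : ∀ i, Measurable (g i)) (hpos : ∀ i v, 0 ≤ g i v)
    (hnorm : ∀ i, eLpNorm (fun v => g i v * Hnorm v ^ β) (ENNReal.ofReal p) volume = 1)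
    (hmax : Tendsto
      (fun i => eLpNorm (fun u => Ilam lam (g i) u * Hnorm u ^ (-α))
        (ENNReal.ofReal q) volume) atTop (nhds (SWbestConst n p q lam α β)))
    (hhalf : ∀ i, muWD p β (g i) (Hball (0 : Hn n) 1) = 1 / 2) :
    (∃ v : ℕ → Hn n, ∀ ε : ℝ, 0 < ε → ∃ R : ℝ, 0 < R ∧
      ∀ i, 1 - ENNReal.ofReal ε ≤ muWD p β (g i) (Hball (v i) R)) ∧
    (∀ φ : ℕ → ℕ, StrictMono φ → ∀ μ : Measure (Hn n),
      (∀ f : Hn n → ℝ, Continuous f → HasCompactSupport f →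
        Tendsto (fun i => ∫ u, f u ∂ muWD p β (g (φ i))) atTop (nhds (∫ u, f u ∂ μ))) →
      μ Set.univ = 1) := by
  have hp0 : 0 < p := by linarith
  have hq0 : 0 < q := by linarith
  have hq1 : 1 ≤ q := by linarith
  have hm : Measurable (Hnorm : Hn n → ℝ) := continuous_Hnorm.measurable
  have hpp : p.HolderConjugate p' := by
    rw [Real.holderConjugate_iff]
    exact ⟨hp, by simpa [one_div] using hp'⟩
  have hQ0 : 0 < Q := by rw [hQ]; positivity
  have hbal' : α + β + lam = Q / p' + Q / q := by
    have h1 : (lam + α + β) / Q = 1 / p' + 1 / q := by linarith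
    rw [div_eq_iff hQ0.ne'] at h1
    have h2 : (1 / p' + 1 / q) * Q = Q / p' + Q / q := by ring
    linarith
  obtain ⟨C, hC, hSW⟩ := SW_bound (n := n) hQ hpp hpq hlam0 hab hα hβ hbal'
  set K := SWbestConst n p q lam α β with hKdef
  have hKt : K ≠ ⊤ := Cst_ne_top hp0 hq0 hC hSW
  have hKb : ∀ F : Hn n → ℝ≥0∞, Measurable F → (∀ v, F v ≠ ⊤) → ∫⁻ v, F v ^ p ≤ 1 →
      (∫⁻ u, TT α β lam F u ^ q) ^ (1 / q) ≤ K * (∫⁻ v, F v ^ p) ^ (1 / p) :=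
    fun F a b c => TT_le_Cst hp0 hq0 hC hSW F a b c
  set F : ℕ → Hn n → ℝ≥0∞ := fun i v => ENNReal.ofReal (g i v * Hnorm v ^ β) with hFdef
  have hFm : ∀ i, Measurable (F i) := fun i => ((hmeas i).mul (hm.pow_const β)).ennreal_ofReal
  have hFt : ∀ i v, F i v ≠ ⊤ := fun i v => ENNReal.ofReal_ne_top
  have hF1 : ∀ i, ∫⁻ v, F i v ^ p = 1 := fun i => (norm_one_iff hp0 β (g i) (hpos i)).1 (hnorm i)
  have hK0 : K ≠ 0 := by
    intro h
    have h1 := hKb (F 0) (hFm 0) (hFt 0) (hF1 0).le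
    rw [h, zero_mul] at h1
    exact TT_norm_ne_zero hp0 hq0 (F 0) (hFm 0) (hF1 0) (nonpos_iff_eq_zero.1 h1)
  have hmu : ∀ i (A : Set (Hn n)), MeasurableSet A → muWD p β (g i) A = ∫⁻ v in A, F i v ^ p :=
    fun i A hA => muWD_apply (g i) (hpos i) A hA hp0.le
  have hmu1 : ∀ i, muWD p β (g i) Set.univ = 1 := fun i => by
    rw [hmu i _ MeasurableSet.univ, Measure.restrict_univ, hF1 i]
  have hhalf' : ∀ i, ∫⁻ v in {v | Hnorm v < 1}, F i v ^ p = 1 / 2 := fun i => by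
    rw [← hmu i _ (measurableSet_lt hm measurable_const), ← Hball_zero, hhalf i]
  have htight : ∀ ε : ℝ, 0 < ε → ∃ R : ℝ, 0 < R ∧
      ∀ i, 1 - ENNReal.ofReal ε ≤ muWD p β (g i) (Hball 0 R) := by
    intro ε hε
    refine tight_all _ hmu1 ?_ ε hε
    intro δ hδ0 hδ
    have hr : 0 < q / p - 1 := by
      have : 1 < q / p := by rwa [lt_div_iff₀ hp0, one_mul]
      linarith
    have hθ : ((1 - δ) ^ (q / p - 1)) ^ (1 / q) < 1 := by
      refine ENNReal.rpow_lt_one (ENNReal.rpow_lt_one ?_ hr) (by positivity)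
      exact ENNReal.sub_lt_self ENNReal.one_ne_top one_ne_zero hδ0
    obtain ⟨e, he0, he⟩ := exists_small hK0 hKt hθ
    obtain ⟨L, hL, hdec⟩ := decouple_small (n := n) hQ hpp hpq hlam0 hα hβ hbal' e he0
    have hep : e ^ p ≠ 0 := by
      intro h
      rcases ENNReal.rpow_eq_zero_iff.1 h with h | h
      · exact he0 h.1
      · linarith [h.2]
    obtain ⟨N, hN⟩ := ENNReal.exists_inv_nat_lt hep
    have hN0 : 0 < N := by
      rcases Nat.eq_zero_or_pos N with h | h
      · subst h
        simp at hN
      · exact h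
    refine ⟨L ^ (2 * N), ?_⟩
    filter_upwards [hmax.eventually_const_lt he] with i hi
    rw [hmu i _ (measurableSet_le measurable_const hm)]
    exact one_region hp0 hq1 hpq hδ hL hKb hdec hN0 hN.le (F i) (hFm i) (hFt i) (hF1 i) (hhalf' i)
      (hi.trans_le (eLpNorm_le_TT hq0 α β lam (g i) (hmeas i) (hpos i)))
  refine ⟨⟨fun _ => 0, htight⟩, fun φ hφ μ hw => ?_⟩
  refine weak_mass (fun i => muWD p β (g (φ i))) (fun i => hmu1 _) (fun ε hε => ?_) μ hw
  obtain ⟨R, hR, h⟩ := htight ε hε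
  exact ⟨R, hR, fun i => h _⟩
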